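/- arXiv:2511.00734 — 4 statements merged into one kernel-verified Lean document; each statement's English description precedes it below -/
import Mathlib

section
/- Let X be a topological space, F a finite-dimensional real normed vector space, and E a topological ℝ-vector bundle over X with model fiber F. Suppose I is a vector bundle endomorphism of E covering the identity of X (i.e., a continuous map of the total space to itself that preserves each fiber and is ℝ-linear on each fiber) such that I_x ∘ I_x = −id on the fiber E_x for every x ∈ X. Then each fiber E_x becomes a complex vector space by setting (a + b·i) • v := a•v + b•I_x(v) for a, b ∈ ℝ, and with these complex structures (extending the given real scalar multiplication) E is a topological ℂ-vector bundle over X. -/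
/-!
The complex structure on `E x` is the algebra map `ℂ → End ℝ (E x)` sending `i` to `I x`; the only
real content is local triviality over `ℂ`. Near `x₀`, a real trivialization `e` turns `I` into a
continuous family `J x` of complex structures on the model fiber `F`. With `J₀ = J x₀`, the operator
`B x = (1 - J₀ ∘ J x) / 2` satisfies `B x ∘ J x = J₀ ∘ B x`, and `B x₀ = 1`, so `B x` is invertible
on a neighbourhood of `x₀`. Composing `e` with `B x` and with a `ℂ`-linear identification
`φ : (F, J₀) ≃ ℂⁿ` gives a fiberwise `ℂ`-linear trivialization
(`exists_complex_trivialization`). In finite dimensions continuity of an operator-valued map can be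
tested pointwise; this gives the continuity of `J` and of the complex coordinate changes.
-/

open Bundle

/-- Scalar multiplication with respect to an explicitly given complex module structure. -/
def modSMul {M : Type*} [AddCommGroup M] (m : Module ℂ M) (c : ℂ) (v : M) : M :=
  letI := m
  c • v

/-- `E` is a topological `ℂ`-vector bundle over `X` with model fiber `F'`, where the complex
module structures on the fibers are given by `m` and the topology on the total space by `tE`. -/
def IsComplexVectorBundle {X : Type*} [TopologicalSpace X] (F' : Type*)
    [NormedAddCommGroup F'] [NormedSpace ℂ F'] (E : X → Type*)
    [∀ x, AddCommGroup (E x)] [∀ x, TopologicalSpace (E x)]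
    (m : ∀ x, Module ℂ (E x)) (tE : TopologicalSpace (Bundle.TotalSpace F' E)) : Prop :=
  letI : ∀ x, Module ℂ (E x) := m
  letI := tE
  ∃ _ : FiberBundle F' E, VectorBundle ℂ F' E

open Set Topology

/-- The complex module structure on a real vector space in which `i` acts as a given endomorphism
`J` with `J ∘ J = -1`. -/
@[reducible]
noncomputable def complexModuleOf {V : Type*} [AddCommGroup V] [Module ℝ V] (J : V →ₗ[ℝ] V)
    (hJ : ∀ v, J (J v) = -v) : Module ℂ V :=
  Module.compHom V
    (Complex.lift ⟨(J : Module.End ℝ V), LinearMap.ext fun v => by simp [hJ]⟩ :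
      ℂ →ₐ[ℝ] Module.End ℝ V).toRingHom

lemma complexModuleOf_smul {V : Type*} [AddCommGroup V] [Module ℝ V] (J : V →ₗ[ℝ] V)
    (hJ : ∀ v, J (J v) = -v) (c : ℂ) (v : V) :
    modSMul (complexModuleOf J hJ) c v = c.re • v + c.im • J v := by
  change (Complex.lift ⟨(J : Module.End ℝ V), _⟩ : ℂ →ₐ[ℝ] Module.End ℝ V) c v = _
  simp [Complex.lift, Complex.liftAux_apply, Module.algebraMap_end_apply]

lemma exists_complex_coordinates {F : Type*} [NormedAddCommGroup F] [NormedSpace ℝ F]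
    [FiniteDimensional ℝ F] (J : F →ₗ[ℝ] F) (hJ : ∀ v, J (J v) = -v) :
    ∃ φ : F ≃L[ℝ] (Fin (Module.finrank ℝ F / 2) → ℂ),
      ∀ v, φ (J v) = Complex.I • φ v := by
  let _ : Module ℂ F := complexModuleOf J hJ
  have hs : ∀ (c : ℂ) (v : F), c • v = c.re • v + c.im • J v := complexModuleOf_smul J hJ
  have : IsScalarTower ℝ ℂ F := ⟨fun a c v => by
    rw [hs, hs]; simp [mul_smul]⟩
  have : Module.Finite ℂ F := Module.Finite.of_restrictScalars_finite ℝ ℂ F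
  have hd : Module.finrank ℂ F = Module.finrank ℝ F / 2 := by
    have := Module.finrank_mul_finrank ℝ ℂ F
    rw [Complex.finrank_real_complex] at this
    omega
  let ψ : F ≃ₗ[ℂ] (Fin (Module.finrank ℝ F / 2) → ℂ) :=
    LinearEquiv.ofFinrankEq _ _ (by simp [hd])
  refine ⟨(ψ.restrictScalars ℝ).toContinuousLinearEquiv, fun v => ?_⟩
  change ψ (J v) = Complex.I • ψ v
  rw [← map_smul, hs]
  simp

section Bundle

variable {X : Type*} [TopologicalSpace X]
  {F : Type*} [NormedAddCommGroup F] [NormedSpace ℝ F] [FiniteDimensional ℝ F]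
  {E : X → Type*} [∀ x, AddCommGroup (E x)] [∀ x, Module ℝ (E x)]
  [TopologicalSpace (TotalSpace F E)]

/-- A fiberwise linear endomorphism `I`, read in a linear trivialization `e`, as a family of
operators on the model fiber (zero away from the base set of `e`). -/
noncomputable def localRep (I : ∀ x, E x →ₗ[ℝ] E x) (e : Trivialization F (π F E))
    [e.IsLinear ℝ] (x : X) : F →L[ℝ] F :=
  LinearMap.toContinuousLinearMap (e.linearMapAt ℝ x ∘ₗ I x ∘ₗ e.symmₗ ℝ x)

lemma localRep_apply (I : ∀ x, E x →ₗ[ℝ] E x) (e : Trivialization F (π F E))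
    [e.IsLinear ℝ] {x : X} (hx : x ∈ e.baseSet) (f : F) :
    localRep I e x f = (e ⟨x, I x (e.symm x f)⟩).2 := by
  simp [localRep, e.coe_linearMapAt_of_mem hx, e.symmₗ_apply hx]

lemma localRep_apply_snd (I : ∀ x, E x →ₗ[ℝ] E x) (e : Trivialization F (π F E))
    [e.IsLinear ℝ] {x : X} (hx : x ∈ e.baseSet) (v : E x) :
    localRep I e x (e ⟨x, v⟩).2 = (e ⟨x, I x v⟩).2 := by
  rw [localRep_apply I e hx, e.symm_apply_apply_mk hx]

lemma continuousOn_localRep (I : ∀ x, E x →ₗ[ℝ] E x) (e : Trivialization F (π F E))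
    [e.IsLinear ℝ]
    (hIcont : Continuous fun p : TotalSpace F E => TotalSpace.mk' F p.1 (I p.1 p.2)) :
    ContinuousOn (localRep I e) e.baseSet := by
  rw [continuousOn_clm_apply]
  intro f
  have h1 : ContinuousOn (fun x => TotalSpace.mk' F x (e.symm x f)) e.baseSet :=
    e.continuousOn_symm.comp (f := fun x => (x, f)) (by fun_prop) (fun x hx => ⟨hx, mem_univ _⟩)
  have h2 := e.continuousOn.comp (hIcont.comp_continuousOn h1)
    (fun x hx => by simpa [e.mem_source] using hx)
  exact (continuous_snd.comp_continuousOn h2).congr fun x hx => localRep_apply I e hx f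

/-- Around every point there is a local trivialization, for the same total space topology, with
model fiber `ℂⁿ`, intertwining `I` with multiplication by `i`. -/
lemma exists_complex_trivialization [∀ x, TopologicalSpace (E x)] [FiberBundle F E]
    [VectorBundle ℝ F E] (I : ∀ x, E x →ₗ[ℝ] E x)
    (hIcont : Continuous fun p : TotalSpace F E => TotalSpace.mk' F p.1 (I p.1 p.2))
    (hI2 : ∀ x (v : E x), I x (I x v) = -v)
    [TopologicalSpace (TotalSpace (Fin (Module.finrank ℝ F / 2) → ℂ) E)]
    (hto : Continuous fun p : TotalSpace F E =>
      TotalSpace.mk' (Fin (Module.finrank ℝ F / 2) → ℂ) p.1 p.2)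
    (hfrom : Continuous fun p : TotalSpace (Fin (Module.finrank ℝ F / 2) → ℂ) E =>
      TotalSpace.mk' F p.1 p.2) (x₀ : X) :
    ∃ t : Trivialization (Fin (Module.finrank ℝ F / 2) → ℂ)
        (π (Fin (Module.finrank ℝ F / 2) → ℂ) E),
      x₀ ∈ t.baseSet ∧ ∀ x ∈ t.baseSet,
        (∀ v w : E x, (t ⟨x, v + w⟩).2 = (t ⟨x, v⟩).2 + (t ⟨x, w⟩).2) ∧
        (∀ (a : ℝ) (v : E x), (t ⟨x, a • v⟩).2 = a • (t ⟨x, v⟩).2) ∧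
        (∀ v : E x, (t ⟨x, I x v⟩).2 = Complex.I • (t ⟨x, v⟩).2) := by
  let e := trivializationAt F E x₀
  have hx₀ : x₀ ∈ e.baseSet := FiberBundle.mem_baseSet_trivializationAt F E x₀
  let J : X → F →L[ℝ] F := localRep I e
  have hJ2 : ∀ x ∈ e.baseSet, ∀ f, J x (J x f) = -f := by
    intro x hx f
    have hf : f = (e ⟨x, e.symm x f⟩).2 := by rw [e.apply_mk_symm hx]
    rw [hf]
    simp only [J, localRep_apply_snd I e hx, hI2]
    exact (e.linear ℝ hx).map_neg _
  let J₀ := J x₀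
  have hJ₀ : ∀ f, J₀ (J₀ f) = -f := hJ2 x₀ hx₀
  obtain ⟨φ, hφ⟩ := exists_complex_coordinates (J₀ : F →ₗ[ℝ] F) hJ₀
  replace hφ : ∀ f, φ (J₀ f) = Complex.I • φ f := hφ
  let B : X → F →L[ℝ] F := fun x => (1 / 2 : ℝ) • (1 - J₀ * J x)
  have hB : ∀ x f, B x f = (1 / 2 : ℝ) • (f - J₀ (J x f)) := fun x f => rfl
  have hBcont : ContinuousOn B e.baseSet := by
    have := continuousOn_localRep I e hIcont
    have h : ContinuousOn (fun x => (1 / 2 : ℝ) • (1 - J₀ * localRep I e x)) e.baseSet := by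
      fun_prop
    exact h
  have hB₀ : B x₀ = 1 := by
    ext f
    rw [hB]
    change (1 / 2 : ℝ) • (f - J₀ (J₀ f)) = f
    rw [hJ₀, sub_neg_eq_add, ← two_smul ℝ f, smul_smul]
    norm_num
  have hBJ : ∀ x ∈ e.baseSet, ∀ f, B x (J x f) = J₀ (B x f) := by
    intro x hx f
    rw [hB, hB, map_smul, map_sub, hJ2 x hx, hJ₀, map_neg]
    congr 1
    abel
  let U : Set X := e.baseSet ∩ B ⁻¹' {b | IsUnit b}
  have hU : IsOpen U := hBcont.isOpen_inter_preimage e.open_baseSet Units.isOpen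
  have hUe : U ⊆ e.baseSet := inter_subset_left
  have hInvCont : ContinuousOn (fun x => Ring.inverse (B x)) U := by
    intro x hx
    obtain ⟨u, hu⟩ : IsUnit (B x) := hx.2
    have h := NormedRing.inverse_continuousAt u
    rw [hu] at h
    exact h.comp_continuousWithinAt ((hBcont x hx.1).mono hUe)
  have hinvB : ∀ x ∈ U, ∀ f, Ring.inverse (B x) (B x f) = f := fun x hx f =>
    congrArg (fun T : F →L[ℝ] F => T f) (Ring.inverse_mul_cancel (B x) hx.2)
  have hBinv : ∀ x ∈ U, ∀ f, B x (Ring.inverse (B x) f) = f := fun x hx f =>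
    congrArg (fun T : F →L[ℝ] F => T f) (Ring.mul_inverse_cancel (B x) hx.2)
  let t : Trivialization (Fin (Module.finrank ℝ F / 2) → ℂ)
      (π (Fin (Module.finrank ℝ F / 2) → ℂ) E) :=
    { toFun := fun p => (p.1, φ (B p.1 (e ⟨p.1, p.2⟩).2))
      invFun := fun q => ⟨q.1, e.symm q.1 (Ring.inverse (B q.1) (φ.symm q.2))⟩
      source := π (Fin (Module.finrank ℝ F / 2) → ℂ) E ⁻¹' U
      target := U ×ˢ univ
      baseSet := U
      open_baseSet := hU
      source_eq := rfl
      target_eq := rfl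
      proj_toFun := fun _ _ => rfl
      map_source' := fun p hp => ⟨hp, mem_univ _⟩
      map_target' := fun q hq => hq.1
      left_inv' := by
        rintro ⟨x, v⟩ hx
        replace hx : x ∈ U := hx
        simp [hinvB x hx, e.symm_apply_apply_mk (hUe hx)]
      right_inv' := by
        rintro ⟨x, f⟩ ⟨hx, -⟩
        replace hx : x ∈ U := hx
        simp [hBinv x hx, e.apply_mk_symm (hUe hx)]
      open_source := by
        have hp : Continuous (π F E) := FiberBundle.continuous_proj F E
        exact hU.preimage (hp.comp hfrom)
      open_target := hU.prod isOpen_univ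
      continuousOn_toFun := by
        have hp : Continuous (π (Fin (Module.finrank ℝ F / 2) → ℂ) E) :=
          (FiberBundle.continuous_proj F E).comp hfrom
        have h1 : ContinuousOn (fun p : TotalSpace (Fin (Module.finrank ℝ F / 2) → ℂ) E =>
            (e ⟨p.1, p.2⟩).2) (π (Fin (Module.finrank ℝ F / 2) → ℂ) E ⁻¹' U) :=
          continuous_snd.comp_continuousOn (e.continuousOn.comp hfrom.continuousOn
            (fun p hp => by simpa [e.mem_source] using hUe hp))
        have h2 : ContinuousOn (fun p : TotalSpace (Fin (Module.finrank ℝ F / 2) → ℂ) E =>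
            B p.1) (π (Fin (Module.finrank ℝ F / 2) → ℂ) E ⁻¹' U) :=
          hBcont.comp hp.continuousOn (fun p hp => hUe hp)
        exact hp.continuousOn.prodMk (φ.continuous.comp_continuousOn (h2.clm_apply h1))
      continuousOn_invFun := by
        have h1 : ContinuousOn (fun q : X × (Fin (Module.finrank ℝ F / 2) → ℂ) =>
            Ring.inverse (B q.1) (φ.symm q.2)) (U ×ˢ univ) :=
          (hInvCont.comp continuousOn_fst (fun q hq => hq.1)).clm_apply
            (φ.symm.continuous.comp continuous_snd).continuousOn
        have h2 := e.continuousOn_symm.comp (continuousOn_fst.prodMk h1)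
          (fun q hq => ⟨hUe hq.1, mem_univ _⟩)
        exact hto.comp_continuousOn h2 }
  have ht : ∀ x (v : E x), (t ⟨x, v⟩).2 = φ (B x (e ⟨x, v⟩).2) := fun x v => rfl
  refine ⟨t, ⟨hx₀, ?_⟩, fun x hx => ?_⟩
  · change IsUnit (B x₀)
    rw [hB₀]
    exact isUnit_one
  · replace hx : x ∈ U := hx
    have hlin := e.linear ℝ (hUe hx)
    refine ⟨fun v w => ?_, fun a v => ?_, fun v => ?_⟩
    · rw [ht, ht, ht, hlin.map_add, map_add, map_add]
    · rw [ht, ht, hlin.map_smul, map_smul, map_smul]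
    · rw [ht, ht, ← localRep_apply_snd I e (hUe hx), ← hφ, ← hBJ x (hUe hx)]

end Bundle

/-- If a topological `ℝ`-vector bundle `E` over `X` with finite-dimensional model fiber `F`
carries a vector bundle endomorphism `I` covering the identity with `I_x ∘ I_x = -id` on every
fiber, then the fibers become complex vector spaces via `(a + b i) • v = a • v + b • I_x v`
(extending the real scalar multiplication), and with these complex structures `E` is a
topological `ℂ`-vector bundle over `X` (with unchanged total space topology). -/
theorem stmt0 {X : Type*} [TopologicalSpace X]
    (F : Type*) [NormedAddCommGroup F] [NormedSpace ℝ F] [FiniteDimensional ℝ F]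
    (E : X → Type*) [∀ x, AddCommGroup (E x)] [∀ x, Module ℝ (E x)]
    [∀ x, TopologicalSpace (E x)] [TopologicalSpace (Bundle.TotalSpace F E)]
    [FiberBundle F E] [VectorBundle ℝ F E]
    (I : ∀ x, E x →ₗ[ℝ] E x)
    (hIcont : Continuous fun p : Bundle.TotalSpace F E =>
      (Bundle.TotalSpace.mk' F p.1 (I p.1 p.2)))
    (hI2 : ∀ x (v : E x), I x (I x v) = -v) :
    ∃ m : ∀ x, Module ℂ (E x),
      (∀ x (a : ℝ) (v : E x), modSMul (m x) ((a : ℂ)) v = a • v) ∧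
      (∀ x (a b : ℝ) (v : E x),
        modSMul (m x) (a + b * Complex.I) v = a • v + b • I x v) ∧
      ∃ tE' : TopologicalSpace
          (Bundle.TotalSpace (Fin (Module.finrank ℝ F / 2) → ℂ) E),
        (@Continuous _ _ _ tE' fun p : Bundle.TotalSpace F E =>
          (Bundle.TotalSpace.mk' (Fin (Module.finrank ℝ F / 2) → ℂ) p.1 p.2)) ∧
        (@Continuous _ _ tE' _ fun p : Bundle.TotalSpace (Fin (Module.finrank ℝ F / 2) → ℂ) E =>
          (Bundle.TotalSpace.mk' F p.1 p.2)) ∧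
        IsComplexVectorBundle (Fin (Module.finrank ℝ F / 2) → ℂ) E m tE' := by
  let F' := Fin (Module.finrank ℝ F / 2) → ℂ
  let m : ∀ x, Module ℂ (E x) := fun x => complexModuleOf (I x) (hI2 x)
  have hm : ∀ x (c : ℂ) (v : E x), modSMul (m x) c v = c.re • v + c.im • I x v :=
    fun x => complexModuleOf_smul (I x) (hI2 x)
  refine ⟨m, fun x a v => by simp [hm], fun x a b v => by simp [hm], ?_⟩
  let g : TotalSpace F' E → TotalSpace F E := fun p => TotalSpace.mk' F p.1 p.2
  let tE' : TopologicalSpace (TotalSpace F' E) := TopologicalSpace.induced g inferInstance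
  have hg : IsInducing g := ⟨rfl⟩
  have hto : Continuous fun p : TotalSpace F E => TotalSpace.mk' F' p.1 p.2 :=
    hg.continuous_iff.2 continuous_id
  refine ⟨tE', hto, hg.continuous, ?_⟩
  choose t ht₀ ht using exists_complex_trivialization I hIcont hI2 hto hg.continuous
  let _ : ∀ x, Module ℂ (E x) := m
  let fb : FiberBundle F' E :=
    { totalSpaceMk_isInducing' := fun b =>
        hg.of_comp_iff.1 (FiberBundle.totalSpaceMk_isInducing F E b)
      trivializationAtlas' := range t
      trivializationAt' := t
      mem_baseSet_trivializationAt' := ht₀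
      trivialization_mem_atlas' := mem_range_self }
  have hlin : ∀ x₀, (t x₀).IsLinear ℂ := fun x₀ => ⟨fun x hx => by
    obtain ⟨hadd, hsmul, hI⟩ := ht x₀ x hx
    refine ⟨hadd, fun c v => ?_⟩
    have hc : c • v = c.re • v + c.im • I x v := hm x c v
    rw [hc, hadd, hsmul, hsmul, hI]
    ext i
    simp only [Pi.add_apply, Pi.smul_apply, smul_eq_mul, Complex.real_smul]
    rw [← mul_assoc, ← add_mul, Complex.re_add_im]⟩
  refine ⟨fb, ⟨?_, ?_⟩⟩
  · rintro _ ⟨⟨x₀, rfl⟩⟩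
    exact hlin x₀
  · rintro _ _ ⟨⟨x₀, rfl⟩⟩ ⟨⟨x₁, rfl⟩⟩
    have := hlin x₀
    have := hlin x₁
    rw [continuousOn_clm_apply]
    intro f
    have h1 : ContinuousOn (fun x => TotalSpace.mk' F' x ((t x₀).symm x f))
        ((t x₀).baseSet ∩ (t x₁).baseSet) :=
      (t x₀).continuousOn_symm.comp (f := fun x => (x, f)) (by fun_prop)
        (fun x hx => ⟨hx.1, mem_univ _⟩)
    have h2 := (t x₁).continuousOn.comp h1 (fun x hx => by
      simpa [(t x₁).mem_source] using hx.2)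
    exact (continuous_snd.comp_continuousOn h2).congr fun x hx =>
      (t x₀).coordChangeL_apply (t x₁) hx f
end

section
/- Let p, q ∈ ℕ. Any two simple modules over the Clifford algebra Cl_{p,q} are Cl_{p,q}-linearly isomorphic if and only if the residue of p − q modulo 8 lies in {0, 2, 3, 4, 6, 7}. -/
/-!
The residue condition says exactly that `p - q ≢ 1` modulo `4`. Write `n = p + q`, let `e_i` be the
images of the standard basis vectors, `e_S` (for `S ⊆ {1, …, n}`) the ordered monomials, and
`v = e_1 ⋯ e_n` the volume element, so that `v² = (-1) ^ (n(n-1)/2 + q)`.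

If `p - q ≡ 1` modulo `4`, then `n` is odd, so `v` is central, and `v² = 1`. The grade involution
negates `v`, so `v ≠ ±1`. Hence neither `1 - v` nor `1 + v` is a unit, each lies in a maximal left
ideal, and the two quotients are simple modules on which `v` acts as `1` and as `-1`
(`not_unique_simple`).

Otherwise `n` is even, or `n` is odd and `v² = -1`, and the algebra is a simple ring
(`twoSided_eq_top`). Take a nonzero element `∑ a_S e_S` of a two-sided ideal, with `a_T ≠ 0`.
Multiplying by `e_T` makes the constant coefficient nonzero; averaging over conjugation by the `e_j`
(`sum_filter_mem`) then kills all monomials except the central ones, which are `1` and, for odd `n`,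
`v`. What is left in the ideal is a nonzero scalar, or `r + s v` with `r ≠ 0` and `v² = -1`; both are
units. Only the fact that the monomials span is used, not their independence. A simple Artinian ring
has a single simple module up to isomorphism.
-/

/-- The quadratic form of signature `(p, q)` on `ℝ^{p+q}`:
`x ↦ x₁² + ⋯ + x_p² - x_{p+1}² - ⋯ - x_{p+q}²`. -/
noncomputable def Qpq (p q : ℕ) : QuadraticForm ℝ (Fin (p + q) → ℝ) :=
  QuadraticMap.weightedSumSquares ℝ (fun i : Fin (p + q) => if (i : ℕ) < p then (1 : ℝ) else -1)

/-! ### Monomials in anticommuting generators -/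

section Monomials

variable {n : ℕ} {A : Type*} [Ring A]

/-- The product, in the order of the list `l`, of those generators `e i` with `i ∈ S`. For
`l = List.finRange n` this is the standard monomial `e_S`. -/
def cliffMono (e : Fin n → A) (l : List (Fin n)) (S : Finset (Fin n)) : A :=
  (l.map fun i => if i ∈ S then e i else 1).prod

/-- The standard monomial `e_S`: the product of the `e i`, `i ∈ S`, in increasing order. -/
def stdMono (e : Fin n → A) (S : Finset (Fin n)) : A := cliffMono e (List.finRange n) S

theorem cliffMono_cons (e : Fin n → A) (a : Fin n) (l : List (Fin n)) (S : Finset (Fin n)) :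
    cliffMono e (a :: l) S = (if a ∈ S then e a else 1) * cliffMono e l S := by
  simp [cliffMono]

theorem stdMono_empty (e : Fin n → A) : stdMono e ∅ = 1 := by
  simp [stdMono, cliffMono]

theorem stdMono_univ (e : Fin n → A) : stdMono e Finset.univ = ((List.finRange n).map e).prod := by
  simp [stdMono, cliffMono]

theorem cliffMono_congr (e : Fin n → A) {l : List (Fin n)} {S T : Finset (Fin n)}
    (h : ∀ i ∈ l, i ∈ S ↔ i ∈ T) : cliffMono e l S = cliffMono e l T := by
  unfold cliffMono
  congr 1
  exact List.map_congr_left fun i hi => by simp only [h i hi]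

variable [Algebra ℝ A]

/-- Moving `e j` through a monomial costs one sign for each factor other than `e j` itself. -/
theorem cliffMono_comm {e : Fin n → A} (anti : ∀ i j, i ≠ j → e i * e j = -(e j * e i))
    (j : Fin n) (S : Finset (Fin n)) (l : List (Fin n)) :
    e j * cliffMono e l S =
      (l.map fun i => if i ∈ S.erase j then (-1 : ℝ) else 1).prod • (cliffMono e l S * e j) := by
  induction l with
  | nil => simp [cliffMono]
  | cons a l ih =>
    rw [cliffMono_cons, List.map_cons, List.prod_cons]
    by_cases ha : a ∈ S
    · by_cases haj : a = j
      · subst haj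
        simp only [ha, if_true, Finset.mem_erase, ne_eq, not_true_eq_false, false_and, if_false,
          one_mul]
        simp only [Finset.mem_erase, ne_eq] at ih
        rw [mul_assoc, ← mul_smul_comm, ← ih]
      · have haj' : a ∈ S.erase j := Finset.mem_erase.2 ⟨haj, ha⟩
        simp only [ha, haj', if_true]
        rw [← mul_assoc, anti j a (Ne.symm haj), neg_mul, mul_assoc, ih, mul_smul_comm,
          ← mul_assoc, mul_smul, neg_one_smul]
    · have haj' : a ∉ S.erase j := fun h => ha (Finset.mem_of_mem_erase h)
      simp only [ha, haj', if_false, one_mul]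
      exact ih

theorem stdMono_comm {e : Fin n → A} (anti : ∀ i j, i ≠ j → e i * e j = -(e j * e i))
    (j : Fin n) (S : Finset (Fin n)) :
    e j * stdMono e S = (-1 : ℝ) ^ (S.erase j).card • (stdMono e S * e j) := by
  rw [stdMono, cliffMono_comm anti, ← Fin.prod_univ_def, Finset.prod_ite_mem,
    Finset.univ_inter, Finset.prod_const]

/-- Left multiplication by `e j` toggles the membership of `j`, up to a nonzero scalar. -/
theorem gen_mul_cliffMono {e : Fin n → A} {w : Fin n → ℝ}
    (anti : ∀ i j, i ≠ j → e i * e j = -(e j * e i))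
    (hsq : ∀ i, e i * e i = w i • (1 : A)) (hw : ∀ i, w i ≠ 0)
    (j : Fin n) (S : Finset (Fin n)) (l : List (Fin n)) (hl : l.Nodup) (hj : j ∈ l) :
    ∃ c : ℝ, c ≠ 0 ∧ e j * cliffMono e l S = c • cliffMono e l (symmDiff {j} S) := by
  induction l with
  | nil => simp at hj
  | cons a l ih =>
    obtain ⟨hal, hl⟩ := List.nodup_cons.1 hl
    rw [cliffMono_cons, cliffMono_cons]
    by_cases haj : a = j
    · subst haj
      have hc : cliffMono e l (symmDiff {a} S) = cliffMono e l S := by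
        refine cliffMono_congr e fun i hi => ?_
        have : i ≠ a := fun h => hal (h ▸ hi)
        simp [Finset.mem_symmDiff, this]
      rw [hc]
      by_cases ha : a ∈ S
      · refine ⟨w a, hw a, ?_⟩
        simp [ha, Finset.mem_symmDiff, ← mul_assoc, hsq]
      · refine ⟨1, one_ne_zero, ?_⟩
        simp [ha, Finset.mem_symmDiff]
    · obtain ⟨c, hc, h⟩ := ih hl ((List.mem_cons.1 hj).resolve_left (Ne.symm haj))
      by_cases ha : a ∈ S
      · refine ⟨-c, neg_ne_zero.2 hc, ?_⟩
        have : a ∈ symmDiff {j} S := by simp [Finset.mem_symmDiff, ha, haj]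
        simp only [ha, this, if_true]
        rw [← mul_assoc, anti j a (Ne.symm haj), neg_mul, mul_assoc, h, mul_smul_comm, neg_smul]
      · refine ⟨c, hc, ?_⟩
        have : a ∉ symmDiff {j} S := by simp [Finset.mem_symmDiff, ha, haj]
        simp only [ha, this, if_false, one_mul, h]

theorem cliffMono_mul_stdMono {e : Fin n → A} {w : Fin n → ℝ}
    (anti : ∀ i j, i ≠ j → e i * e j = -(e j * e i))
    (hsq : ∀ i, e i * e i = w i • (1 : A)) (hw : ∀ i, w i ≠ 0)
    (S T : Finset (Fin n)) (l : List (Fin n)) (hl : l.Nodup) :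
    ∃ c : ℝ, c ≠ 0 ∧ cliffMono e l S * stdMono e T =
      c • stdMono e (symmDiff (S.filter (· ∈ l)) T) := by
  induction l with
  | nil => exact ⟨1, one_ne_zero, by simp [cliffMono, ← Finset.bot_eq_empty]⟩
  | cons a l ih =>
    obtain ⟨hal, hl⟩ := List.nodup_cons.1 hl
    obtain ⟨c, hc, h⟩ := ih hl
    rw [cliffMono_cons]
    by_cases ha : a ∈ S
    · obtain ⟨d, hd, h'⟩ := gen_mul_cliffMono anti hsq hw a
        (symmDiff (S.filter (· ∈ l)) T) _ (List.nodup_finRange n) (List.mem_finRange a)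
      refine ⟨c * d, mul_ne_zero hc hd, ?_⟩
      have hset : symmDiff (S.filter (· ∈ a :: l)) T
          = symmDiff {a} (symmDiff (S.filter (· ∈ l)) T) := by
        rw [← symmDiff_assoc]
        congr 1
        ext i
        by_cases hi : i = a
        · subst hi; simp [Finset.mem_symmDiff, ha, hal]
        · simp [Finset.mem_symmDiff, hi]
      rw [if_pos ha, mul_assoc, h, mul_smul_comm, stdMono, h', hset, mul_smul, stdMono]
    · refine ⟨c, hc, ?_⟩
      have hset : S.filter (· ∈ a :: l) = S.filter (· ∈ l) := by
        ext i
        by_cases hi : i = a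
        · subst hi; simp [ha]
        · simp [hi]
      rw [if_neg ha, one_mul, h, hset]

theorem stdMono_mul_stdMono {e : Fin n → A} {w : Fin n → ℝ}
    (anti : ∀ i j, i ≠ j → e i * e j = -(e j * e i))
    (hsq : ∀ i, e i * e i = w i • (1 : A)) (hw : ∀ i, w i ≠ 0) (S T : Finset (Fin n)) :
    ∃ c : ℝ, c ≠ 0 ∧ stdMono e S * stdMono e T = c • stdMono e (symmDiff S T) := by
  obtain ⟨c, hc, h⟩ := cliffMono_mul_stdMono anti hsq hw S T _ (List.nodup_finRange n)
  exact ⟨c, hc, by simpa [stdMono] using h⟩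

/-- The monomials span: their span contains `1` and is stable under left multiplication by the
generators. -/
theorem span_stdMono {e : Fin n → A} {w : Fin n → ℝ}
    (anti : ∀ i j, i ≠ j → e i * e j = -(e j * e i))
    (hsq : ∀ i, e i * e i = w i • (1 : A)) (hw : ∀ i, w i ≠ 0)
    (gen : Algebra.adjoin ℝ (Set.range e) = ⊤) :
    Submodule.span ℝ (Set.range (stdMono e)) = ⊤ := by
  have key : ∀ x ∈ Algebra.adjoin ℝ (Set.range e), ∀ y ∈ Submodule.span ℝ (Set.range (stdMono e)),
      x * y ∈ Submodule.span ℝ (Set.range (stdMono e)) := by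
    intro x hx
    induction hx using Algebra.adjoin_induction with
    | mem x hx =>
      obtain ⟨j, rfl⟩ := hx
      intro y hy
      induction hy using Submodule.span_induction with
      | mem y hy =>
        obtain ⟨S, rfl⟩ := hy
        obtain ⟨c, -, h⟩ := gen_mul_cliffMono anti hsq hw j S _ (List.nodup_finRange n)
          (List.mem_finRange j)
        rw [stdMono, h]
        exact Submodule.smul_mem _ _ (Submodule.subset_span ⟨_, rfl⟩)
      | zero => simp
      | add y z _ _ hy hz => rw [mul_add]; exact add_mem hy hz
      | smul c y _ hy => rw [mul_smul_comm]; exact Submodule.smul_mem _ _ hy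
    | algebraMap r => intro y hy; rw [← Algebra.smul_def]; exact Submodule.smul_mem _ _ hy
    | add x z _ _ hx hz => intro y hy; rw [add_mul]; exact add_mem (hx y hy) (hz y hy)
    | mul x z _ _ hx hz => intro y hy; rw [mul_assoc]; exact hx _ (hz y hy)
  refine eq_top_iff.2 fun x _ => ?_
  have h1 : (1 : A) ∈ Submodule.span ℝ (Set.range (stdMono e)) :=
    Submodule.subset_span ⟨∅, stdMono_empty e⟩
  simpa using key x (gen ▸ Algebra.mem_top) 1 h1

/-- A list product of generators not involving `a` passes through `e a` up to the sign
`(-1) ^ length`. -/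
theorem gen_mul_prod {e : Fin n → A} (anti : ∀ i j, i ≠ j → e i * e j = -(e j * e i))
    (a : Fin n) (l : List (Fin n)) (ha : a ∉ l) :
    e a * (l.map e).prod = (-1 : ℝ) ^ l.length • ((l.map e).prod * e a) := by
  induction l with
  | nil => simp
  | cons b l ih =>
    simp only [List.mem_cons, not_or] at ha
    rw [List.map_cons, List.prod_cons, ← mul_assoc, anti a b ha.1, neg_mul, mul_assoc, ih ha.2,
      List.length_cons, pow_succ, mul_neg_one, neg_smul, mul_smul_comm, mul_assoc]

theorem prod_mul_self {e : Fin n → A} {w : Fin n → ℝ}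
    (anti : ∀ i j, i ≠ j → e i * e j = -(e j * e i))
    (hsq : ∀ i, e i * e i = w i • (1 : A)) (l : List (Fin n)) (hl : l.Nodup) :
    (l.map e).prod * (l.map e).prod =
      ((-1 : ℝ) ^ (l.length.choose 2) * (l.map w).prod) • (1 : A) := by
  induction l with
  | nil => simp
  | cons a l ih =>
    obtain ⟨hal, hl⟩ := List.nodup_cons.1 hl
    have h1 : (l.map e).prod * e a = (-1 : ℝ) ^ l.length • (e a * (l.map e).prod) := by
      rw [gen_mul_prod anti a l hal, smul_smul, ← mul_pow]; simp
    rw [List.map_cons, List.prod_cons, mul_assoc, ← mul_assoc _ (e a), h1, smul_mul_assoc,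
      mul_assoc, ih hl, mul_smul_comm, mul_smul_comm, mul_smul_comm, mul_one, hsq,
      smul_smul, smul_smul, List.map_cons, List.prod_cons, List.length_cons,
      Nat.choose_succ_succ' l.length 1, Nat.choose_one_right, pow_add]
    congr 1
    ring

theorem stdMono_univ_mul_self {e : Fin n → A} {w : Fin n → ℝ}
    (anti : ∀ i j, i ≠ j → e i * e j = -(e j * e i))
    (hsq : ∀ i, e i * e i = w i • (1 : A)) :
    stdMono e Finset.univ * stdMono e Finset.univ =
      ((-1 : ℝ) ^ (n.choose 2) * ∏ i, w i) • (1 : A) := by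
  rw [stdMono_univ, prod_mul_self anti hsq _ (List.nodup_finRange n), List.length_finRange,
    Fin.prod_univ_def]

/-- The averaging argument: a two-sided ideal containing `∑ b_S e_S` contains the part of the
sum over those `S` for which `e_S` commutes with `e_j` for all `j` in a given list. The step for
`j` is the projection `y ↦ (y + e_j y e_j⁻¹) / 2`. -/
theorem sum_filter_mem {e : Fin n → A} {w : Fin n → ℝ}
    (anti : ∀ i j, i ≠ j → e i * e j = -(e j * e i))
    (hsq : ∀ i, e i * e i = w i • (1 : A)) (hw : ∀ i, w i * w i = 1)
    (I : Ideal A) [I.IsTwoSided] (b : Finset (Fin n) → ℝ)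
    (hb : ∑ S, b S • stdMono e S ∈ I) (l : List (Fin n)) :
    ∑ S, (if ∀ j ∈ l, Even (S.erase j).card then b S else 0) • stdMono e S ∈ I := by
  have smul_mem : ∀ (c : ℝ) (x : A), x ∈ I → c • x ∈ I := fun c x hx => by
    rw [Algebra.smul_def]; exact I.mul_mem_left _ hx
  induction l with
  | nil => simpa using hb
  | cons j l ih =>
    have h := smul_mem (1 / 2) _
      (add_mem ih (smul_mem (w j) _ (I.mul_mem_right (e j) (I.mul_mem_left (e j) ih))))
    convert h using 1
    rw [Finset.mul_sum, Finset.sum_mul, Finset.smul_sum, ← Finset.sum_add_distrib,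
      Finset.smul_sum]
    refine Finset.sum_congr rfl fun S _ => ?_
    have hconj : e j * stdMono e S * e j
        = ((-1 : ℝ) ^ (S.erase j).card * w j) • stdMono e S := by
      rw [stdMono_comm anti, smul_mul_assoc, mul_assoc, hsq, mul_smul_comm, mul_one, smul_smul]
    rw [mul_smul_comm, smul_mul_assoc, hconj, smul_smul, smul_smul, ← add_smul, smul_smul]
    congr 1
    by_cases hl : ∀ i ∈ l, Even (S.erase i).card
    · rcases Nat.even_or_odd (S.erase j).card with hj | hj
      · rw [if_pos hl, if_pos (by simpa using ⟨hj, hl⟩), hj.neg_one_pow]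
        linear_combination (-(1 / 2) * b S) * hw j
      · rw [if_pos hl, if_neg (by
          intro hh; exact (Nat.not_even_iff_odd.2 hj) (hh j (List.mem_cons_self ..))),
          hj.neg_one_pow]
        linear_combination ((1 / 2) * b S) * hw j
    · rw [if_neg hl, if_neg (fun hh => hl fun i hi => hh i (List.mem_cons_of_mem _ hi))]
      ring

/-- A monomial commuting with all generators is `1`, or the volume element when `n` is odd. -/
theorem even_erase_card {S : Finset (Fin n)} (h : ∀ j, Even (S.erase j).card) :
    S = ∅ ∨ (S = Finset.univ ∧ Odd n) := by
  by_contra! hS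
  obtain ⟨h1, h2⟩ := hS
  obtain ⟨i, hi⟩ := h1
  have hi' := h i
  have hpos := Finset.card_pos.2 ⟨i, hi⟩
  rw [Finset.card_erase_of_mem hi] at hi'
  by_cases hu : S = Finset.univ
  · have := h2 hu
    subst hu
    rw [Finset.card_univ, Fintype.card_fin] at *
    grind
  · obtain ⟨j, hj⟩ : ∃ j, j ∉ S := by
      by_contra! hh
      exact hu (Finset.eq_univ_iff_forall.2 hh)
    have hj' := h j
    rw [Finset.erase_eq_of_notMem hj] at hj'
    grind

/-- Every nonzero two-sided ideal of an algebra generated by anticommuting square roots of `±1` is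
the whole algebra, provided that there are evenly many generators or the volume element squares
to `-1`. -/
theorem twoSided_eq_top {e : Fin n → A} {w : Fin n → ℝ}
    (anti : ∀ i j, i ≠ j → e i * e j = -(e j * e i))
    (hsq : ∀ i, e i * e i = w i • (1 : A)) (hw : ∀ i, w i * w i = 1)
    (gen : Algebra.adjoin ℝ (Set.range e) = ⊤)
    (hn : Even n ∨ stdMono e Finset.univ * stdMono e Finset.univ = -1)
    (I : Ideal A) [I.IsTwoSided] (hI : I ≠ ⊥) : I = ⊤ := by
  have hw0 : ∀ i, w i ≠ 0 := fun i h => by simpa [h] using hw i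
  have smul_mem : ∀ (c : ℝ) (x : A), x ∈ I → c • x ∈ I := fun c x hx => by
    rw [Algebra.smul_def]; exact I.mul_mem_left _ hx
  obtain ⟨x, hxI, hx0⟩ := Submodule.exists_mem_ne_zero_of_ne_bot hI
  have hx : x ∈ Submodule.span ℝ (Set.range (stdMono e)) := by
    rw [span_stdMono anti hsq hw0 gen]; trivial
  obtain ⟨a, ha⟩ := (Submodule.mem_span_range_iff_exists_fun ℝ).1 hx
  obtain ⟨T, hT⟩ : ∃ T, a T ≠ 0 := by
    by_contra! h
    exact hx0 (by rw [← ha]; simp [h])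
  choose c hc hmul using stdMono_mul_stdMono anti hsq hw0
  -- Left multiplication by `e_T` moves the nonzero coefficient of `e_T` to the constant term.
  have hb : ∑ S, (a (symmDiff T S) * c T (symmDiff T S)) • stdMono e S ∈ I := by
    convert I.mul_mem_left (stdMono e T) hxI using 1
    rw [← ha, Finset.mul_sum]
    refine Finset.sum_bij' (fun S _ => symmDiff T S) (fun S _ => symmDiff T S) ?_ ?_ ?_ ?_ ?_
    · simp
    · simp
    · simp
    · simp
    · intro S _
      rw [mul_smul_comm, hmul, smul_smul, symmDiff_symmDiff_cancel_left]
  set b : Finset (Fin n) → ℝ := fun S => a (symmDiff T S) * c T (symmDiff T S) with hbdef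
  have hb0 : b ∅ ≠ 0 := by
    simp only [hbdef, ← Finset.bot_eq_empty, symmDiff_bot]
    exact mul_ne_zero hT (hc _ _)
  have hsum := sum_filter_mem anti hsq hw I b hb (List.finRange n)
  simp only [List.mem_finRange, true_imp_iff] at hsum
  rw [Ideal.eq_top_iff_one]
  rcases Nat.even_or_odd n with hev | hodd
  · rw [Finset.sum_eq_single ∅] at hsum
    · have := smul_mem (b ∅)⁻¹ _ hsum
      simpa [stdMono_empty, smul_smul, hb0] using this
    · intro S _ hS
      rw [if_neg, zero_smul]
      intro h
      rcases even_erase_card h with h | ⟨-, h⟩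
      · exact hS h
      · exact Nat.not_even_iff_odd.2 h hev
    · simp
  · have hvol := hn.resolve_left (Nat.not_even_iff_odd.2 hodd)
    set v := stdMono e Finset.univ with hv
    have hne : (∅ : Finset (Fin n)) ≠ Finset.univ := by
      have : Nonempty (Fin n) := ⟨⟨0, hodd.pos⟩⟩
      exact (Finset.univ_nonempty).ne_empty.symm
    rw [Finset.sum_eq_add (∅ : Finset (Fin n)) Finset.univ hne] at hsum
    · have hcond : ∀ j : Fin n, Even ((Finset.univ : Finset (Fin n)).erase j).card := by
        intro j
        rw [Finset.card_erase_of_mem (Finset.mem_univ j), Finset.card_univ, Fintype.card_fin]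
        exact hodd.tsub_odd odd_one
      rw [if_pos (by simp), if_pos hcond, stdMono_empty, ← hv] at hsum
      set r := b ∅
      set s := b Finset.univ
      have hrs : r * r + s * s ≠ 0 := by
        have := mul_self_pos.2 hb0
        nlinarith [mul_self_nonneg s]
      -- `r + s v` is invertible, with inverse `(r - s v) / (r² + s²)`.
      have h := smul_mem (r * r + s * s)⁻¹ _ (I.mul_mem_left (r • (1 : A) - s • v) hsum)
      have hcalc : (r • (1 : A) - s • v) * (r • (1 : A) + s • v) = (r * r + s * s) • (1 : A) := by
        simp only [sub_mul, mul_add, smul_mul_assoc, mul_smul_comm, mul_one, one_mul, hvol]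
        module
      rwa [hcalc, smul_smul, inv_mul_cancel₀ hrs, one_smul] at h
    · rintro S - ⟨h1, h2⟩
      rw [if_neg, zero_smul]
      intro h
      rcases even_erase_card h with h | ⟨h, -⟩
      · exact h1 h
      · exact h2 h
    · simp
    · simp

end Monomials

/-! ### Counting simple modules -/

section CentralInvolution

variable {A : Type} [Ring A]

/-- If `1 - z` is a central non-unit, it lies in a maximal left ideal `J`, and `z` acts as the
identity on the simple module `A ⧸ J`. -/
theorem exists_simple_of_central {z : A} (hz : ∀ x, z * x = x * z) (hu : ¬ IsUnit (1 - z)) :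
    ∃ J : Ideal A, IsSimpleModule A (A ⧸ J) ∧ ∀ v : A ⧸ J, z • v = v := by
  have hne : Ideal.span {1 - z} ≠ ⊤ := by
    intro h
    rw [Ideal.eq_top_iff_one] at h
    obtain ⟨a, ha⟩ := Ideal.mem_span_singleton'.1 h
    refine hu ⟨⟨1 - z, a, ?_, ha⟩, rfl⟩
    rwa [sub_mul, one_mul, hz, ← mul_one_sub]
  obtain ⟨J, hJ, hle⟩ := Ideal.exists_le_maximal _ hne
  refine ⟨J, isSimpleModule_iff_isCoatom.2 hJ.out, fun v => ?_⟩
  obtain ⟨x, rfl⟩ := Submodule.Quotient.mk_surjective J v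
  rw [← Submodule.Quotient.mk_smul, eq_comm, Submodule.Quotient.eq]
  have : x - z • x = x * (1 - z) := by rw [smul_eq_mul, hz, mul_sub, mul_one]
  rw [this]
  exact J.mul_mem_left _ (hle (Ideal.mem_span_singleton_self _))

/-- A central square root of `1` other than `±1` acts as `1` on one simple module and as `-1` on
another, so the two are not isomorphic. -/
theorem not_unique_simple {z : A} (h2 : IsUnit (2 : A)) (hz : ∀ x, z * x = x * z)
    (hzz : z * z = 1) (h1 : z ≠ 1) (h1' : z ≠ -1) :
    ¬ ∀ (M N : Type) [AddCommGroup M] [Module A M] [AddCommGroup N] [Module A N],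
      IsSimpleModule A M → IsSimpleModule A N → Nonempty (M ≃ₗ[A] N) := by
  intro H
  have hprod : (1 - z) * (1 + z) = 0 := by simp [sub_mul, mul_add, hzz, add_comm]
  have hprod' : (1 - -z) * (z - 1) = 0 := by simp [mul_sub, add_mul, hzz, add_comm]
  obtain ⟨J, hJ, hact⟩ := exists_simple_of_central hz
    (fun hu => h1' (by
      have := hu.mul_right_eq_zero.1 hprod
      rwa [add_comm, add_eq_zero_iff_eq_neg] at this))
  obtain ⟨K, hK, hact'⟩ := exists_simple_of_central (z := -z) (by simp [hz])
    (fun hu => h1 (by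
      have := hu.mul_right_eq_zero.1 hprod'
      rwa [sub_eq_zero] at this))
  obtain ⟨f⟩ := H _ _ hJ hK
  have := IsSimpleModule.nontrivial A (A ⧸ J)
  obtain ⟨v, hv⟩ := exists_ne (0 : A ⧸ J)
  have e1 : f v = -(f v) := by
    have h3 : f v = z • f v := by rw [← map_smul, hact]
    have h4 := hact' (f v)
    rw [neg_smul, ← h3] at h4
    exact h4.symm
  have e2 : (2 : A) • f v = 0 := by
    rw [two_smul]
    nth_rewrite 1 [e1]
    simp
  rw [h2.smul_eq_zero] at e2
  exact hv (by simpa using e2)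

end CentralInvolution

theorem unique_simple_of_isSimpleRing (A : Type) [Ring A] [IsSimpleRing A] [IsArtinianRing A]
    (M N : Type) [AddCommGroup M] [Module A M] [AddCommGroup N] [Module A N]
    [IsSimpleModule A M] [IsSimpleModule A N] : Nonempty (M ≃ₗ[A] N) := by
  have := IsSimpleRing.isSemisimpleRing_iff_isArtinianRing.mpr ‹IsArtinianRing A›
  obtain ⟨I, ⟨f⟩⟩ := IsSemisimpleRing.exists_linearEquiv_ideal_of_isSimpleModule A M
  obtain ⟨J, ⟨g⟩⟩ := IsSemisimpleRing.exists_linearEquiv_ideal_of_isSimpleModule A N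
  have := IsSimpleModule.congr f.symm
  have := IsSimpleModule.congr g.symm
  exact ⟨f.trans ((IsSimpleRing.isIsotypic A A J I).some.trans g.symm)⟩

/-! ### The Clifford algebra of signature `(p, q)` -/

section Clifford

variable (p q : ℕ)

/-- The sign `±1` of the `i`-th basis vector for the form `Qpq p q`. -/
noncomputable def sgn (i : Fin (p + q)) : ℝ := if (i : ℕ) < p then 1 else -1

/-- The image in the Clifford algebra of the `i`-th standard basis vector. -/
noncomputable def cliffGen (i : Fin (p + q)) : CliffordAlgebra (Qpq p q) :=
  CliffordAlgebra.ι (Qpq p q) (Pi.single i 1)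

theorem sgn_mul_self (i : Fin (p + q)) : sgn p q i * sgn p q i = 1 := by
  unfold sgn; split_ifs <;> norm_num

theorem prod_sgn : ∏ i, sgn p q i = (-1) ^ q := by
  rw [Fin.prod_univ_add]
  simp [sgn]

theorem Qpq_apply (v : Fin (p + q) → ℝ) : Qpq p q v = ∑ i, sgn p q i * (v i * v i) := by
  simp [Qpq, QuadraticMap.weightedSumSquares_apply, sgn]

theorem cliffGen_sq (i : Fin (p + q)) :
    cliffGen p q i * cliffGen p q i = sgn p q i • (1 : CliffordAlgebra (Qpq p q)) := by
  rw [cliffGen, CliffordAlgebra.ι_sq_scalar, Algebra.algebraMap_eq_smul_one, Qpq_apply,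
    Finset.sum_eq_single i]
  · simp
  · intro j _ hj
    simp [hj]
  · simp

theorem cliffGen_anti (i j : Fin (p + q)) (hij : i ≠ j) :
    cliffGen p q i * cliffGen p q j = -(cliffGen p q j * cliffGen p q i) := by
  refine CliffordAlgebra.ι_mul_ι_comm_of_isOrtho ?_
  rw [QuadraticMap.isOrtho_def, Qpq_apply, Qpq_apply, Qpq_apply, ← Finset.sum_add_distrib]
  refine Finset.sum_congr rfl fun k _ => ?_
  have : (Pi.single i 1 : Fin (p + q) → ℝ) k * (Pi.single j 1 : Fin (p + q) → ℝ) k = 0 := by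
    by_cases h : k = i
    · subst h; simp [hij]
    · simp [h]
  simp only [Pi.add_apply]
  linear_combination (2 * sgn p q k) * this

theorem adjoin_cliffGen : Algebra.adjoin ℝ (Set.range (cliffGen p q)) = ⊤ := by
  rw [eq_top_iff, ← CliffordAlgebra.adjoin_range_ι, Algebra.adjoin_le_iff]
  rintro _ ⟨v, rfl⟩
  rw [pi_eq_sum_univ' v, map_sum]
  refine Subalgebra.sum_mem _ fun i _ => ?_
  rw [map_smul]
  refine Subalgebra.smul_mem _ (Algebra.subset_adjoin (Set.mem_range.2 ⟨i, ?_⟩)) _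
  rw [cliffGen]

/-- The volume element `e₁ ⋯ e_{p+q}`. -/
noncomputable def vol : CliffordAlgebra (Qpq p q) := stdMono (cliffGen p q) Finset.univ

theorem vol_mul_self : vol p q * vol p q =
    ((-1 : ℝ) ^ ((p + q).choose 2 + q)) • (1 : CliffordAlgebra (Qpq p q)) := by
  rw [vol, stdMono_univ_mul_self (cliffGen_anti p q) (cliffGen_sq p q), prod_sgn, pow_add]

theorem vol_central (hodd : Odd (p + q)) (x : CliffordAlgebra (Qpq p q)) :
    vol p q * x = x * vol p q := by
  have hx : x ∈ Algebra.adjoin ℝ (Set.range (cliffGen p q)) := adjoin_cliffGen p q ▸ Algebra.mem_top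
  induction hx using Algebra.adjoin_induction with
  | mem x hx =>
    obtain ⟨j, rfl⟩ := hx
    have hev : Even ((Finset.univ : Finset (Fin (p + q))).erase j).card := by
      rw [Finset.card_erase_of_mem (Finset.mem_univ j), Finset.card_univ, Fintype.card_fin]
      exact hodd.tsub_odd odd_one
    rw [vol, stdMono_comm (cliffGen_anti p q), hev.neg_one_pow, one_smul]
  | algebraMap r => exact (Algebra.commutes r _).symm
  | add x y _ _ hx hy => rw [mul_add, add_mul, hx, hy]
  | mul x y _ _ hx hy => rw [← mul_assoc, hx, mul_assoc, hy, mul_assoc]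

theorem involute_vol (hodd : Odd (p + q)) : CliffordAlgebra.involute (vol p q) = -vol p q := by
  have key : ∀ l : List (Fin (p + q)), CliffordAlgebra.involute ((l.map (cliffGen p q)).prod) =
      (-1) ^ l.length * (l.map (cliffGen p q)).prod := by
    intro l
    induction l with
    | nil => simp
    | cons a l ih =>
      have hc := (Commute.neg_one_left (cliffGen p q a)).pow_left l.length
      rw [List.map_cons, List.prod_cons, map_mul, ih, List.length_cons, pow_succ', ← mul_assoc,
        cliffGen, CliffordAlgebra.involute_ι, ← cliffGen, neg_mul, ← hc.eq]
      simp [mul_assoc]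
  rw [vol, stdMono_univ, key, List.length_finRange, hodd.neg_one_pow, neg_one_mul]

theorem choose_two_odd {n m : ℕ} (h : n = 2 * m + 1) : n.choose 2 = 2 * (m * m) + m := by
  subst h
  rw [Nat.choose_two_right]
  have : (2 * m + 1) * (2 * m + 1 - 1) = (2 * (m * m) + m) * 2 := by
    rw [Nat.add_sub_cancel]; ring
  rw [this, Nat.mul_div_cancel _ two_pos]

theorem parity_one {p q : ℕ} (h : ((p : ℤ) - q) % 4 = 1) :
    Odd (p + q) ∧ Even ((p + q).choose 2 + q) := by
  obtain ⟨m, hm⟩ : ∃ m, p + q = 2 * m + 1 := ⟨(p + q) / 2, by omega⟩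
  have hmq : m % 2 = q % 2 := by omega
  rw [choose_two_odd hm]
  exact ⟨⟨m, hm⟩, by grind⟩

theorem parity_three {p q : ℕ} (h : ((p : ℤ) - q) % 4 = 3) : Odd ((p + q).choose 2 + q) := by
  obtain ⟨m, hm⟩ : ∃ m, p + q = 2 * m + 1 := ⟨(p + q) / 2, by omega⟩
  have hmq : m % 2 ≠ q % 2 := by omega
  rw [choose_two_odd hm]
  grind

instance finite_clifford : Module.Finite ℝ (CliffordAlgebra (Qpq p q)) := by
  refine ⟨Submodule.fg_def.2 ⟨_, Set.finite_range (stdMono (cliffGen p q)), ?_⟩⟩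
  exact span_stdMono (cliffGen_anti p q) (cliffGen_sq p q)
    (fun i h => by simpa [h] using sgn_mul_self p q i) (adjoin_cliffGen p q)

theorem isSimpleRing_clifford (h : ((p : ℤ) - q) % 4 ≠ 1) :
    IsSimpleRing (CliffordAlgebra (Qpq p q)) := by
  have hn : Even (p + q) ∨ vol p q * vol p q = -1 := by
    rcases Nat.even_or_odd (p + q) with hev | hodd
    · exact Or.inl hev
    · right
      have h3 : ((p : ℤ) - q) % 4 = 3 := by
        obtain ⟨k, hk⟩ := hodd
        omega
      rw [vol_mul_self, (parity_three h3).neg_one_pow, neg_one_smul]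
  refine isSimpleRing_iff_isTwoSided_imp.2 ⟨inferInstance, fun I _ => ?_⟩
  refine or_iff_not_imp_left.2 fun hI => ?_
  exact twoSided_eq_top (cliffGen_anti p q) (cliffGen_sq p q) (sgn_mul_self p q)
    (adjoin_cliffGen p q) hn I hI

end Clifford

/-- Any two simple modules over the Clifford algebra `Cl_{p,q}` are isomorphic if and only
if the residue of `p - q` modulo 8 lies in `{0, 2, 3, 4, 6, 7}`. -/
theorem stmt10 (p q : ℕ) :
    (∀ (M N : Type) [AddCommGroup M] [Module (CliffordAlgebra (Qpq p q)) M]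
      [AddCommGroup N] [Module (CliffordAlgebra (Qpq p q)) N],
      IsSimpleModule (CliffordAlgebra (Qpq p q)) M →
      IsSimpleModule (CliffordAlgebra (Qpq p q)) N →
      Nonempty (M ≃ₗ[CliffordAlgebra (Qpq p q)] N)) ↔
    ((p : ℤ) - (q : ℤ)) % 8 ∈ ({0, 2, 3, 4, 6, 7} : Set ℤ) := by
  have hmod : ((p : ℤ) - (q : ℤ)) % 8 ∈ ({0, 2, 3, 4, 6, 7} : Set ℤ) ↔
      ((p : ℤ) - q) % 4 ≠ 1 := by
    simp only [Set.mem_insert_iff, Set.mem_singleton_iff]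
    omega
  rw [hmod]
  constructor
  · intro H h
    obtain ⟨hodd, hev⟩ := parity_one h
    have hsq : vol p q * vol p q = 1 := by
      rw [vol_mul_self, hev.neg_one_pow, one_smul]
    have h2 : IsUnit (2 : CliffordAlgebra (Qpq p q)) := by
      have := (IsUnit.mk0 (2 : ℝ) two_ne_zero).map (algebraMap ℝ (CliffordAlgebra (Qpq p q)))
      rwa [map_ofNat] at this
    -- If `vol = ±1`, the grade involution both fixes and negates it, so `2 = 0`.
    have hfix : CliffordAlgebra.involute (vol p q) ≠ vol p q := by
      rw [involute_vol p q hodd]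
      intro hneg
      have h0 : (2 : CliffordAlgebra (Qpq p q)) * vol p q = 0 := by
        rw [two_mul]; nth_rewrite 1 [← hneg]; simp
      have hv : vol p q = 0 := h2.mul_right_eq_zero.1 h0
      simp [hv] at hsq
    refine not_unique_simple h2 (vol_central p q hodd) hsq ?_ ?_ H
    · intro h; exact hfix (by simp [h])
    · intro h; exact hfix (by simp [h])
  · intro h M N _ _ _ _ hM hN
    have := isSimpleRing_clifford p q h
    have : IsArtinianRing (CliffordAlgebra (Qpq p q)) := IsArtinianRing.of_finite ℝ _
    exact unique_simple_of_isSimpleRing _ M N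
end

section
/- Let 𝕜 be ℝ or ℂ and c = dim_ℝ 𝕜. Let k ∈ ℕ, let D^k denote the closed unit ball in ℝ^k and ∂D^k its boundary sphere. Let E be a 𝕜-vector bundle of rank r over D^k, let m ∈ ℕ, and let ι : ∂D^k × 𝕜^m → E|_{∂D^k} be an injective vector bundle map from the trivial rank-m bundle over ∂D^k. If r − m ≥ ⌈(k+1)/c⌉ − 1, then ι extends to an injective vector bundle map ι' : D^k × 𝕜^m → E (i.e., the restriction of ι' over ∂D^k equals ι). -/
/-!
The base is contractible, so `E` is trivial, and the theorem reduces to extending a continuous map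
from the sphere `∂D^k` into the open set of linearly independent `m`-tuples in `𝕜^r` over `D^k`.

*Extension of frames.* The dependent `m`-tuples are covered by finitely many smooth images of real
vector spaces of dimension `c (r + 1) (m - 1)`: one vector is a linear combination of the others.
The numerical hypothesis says exactly that `k + c (r + 1) (m - 1) < c r m`. Hence, for a `C¹` map
`h` defined on `ℝ^k`, the tuples `A` such that `h x + A` is dependent for some `x` form a set of
Hausdorff dimension less than that of the ambient space, whose complement is dense
(`dense_translates_linearIndependent`). A Tietze extension of the given map on the sphere is
approximated by a `C¹` map, moved off the dependent tuples by a small generic translation, and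
interpolated with the original extension near the sphere, where independence is stable under small
perturbations (`exists_extension_linearIndependent`).

*Triviality of `E`.* A partition of unity exhibits `E` as a retract of a trivial bundle
(`exists_retract_of_trivial`), that is, as the image of a continuous family of idempotents `Q x`.
If `‖Q y - Q x‖ < 1` then `Q y` is injective on the range of `Q x`. Composing the idempotents at
finely spaced points of the contraction path from the base point to `x` gives a parallel transport
continuous in `x` (`exists_transport`), and so a global trivialization
(`exists_global_trivialization`).
-/

open Bundle Metric Topology

/-! ### Extending linearly independent tuples from the sphere to the ball -/

/-- A generic constant translation makes a `C¹` family of `m`-tuples in `𝕜^r` over `ℝ^k` linearly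
independent everywhere, because `k` is less than the real codimension `c (r - m + 1)` of the set of
linearly dependent tuples. -/
theorem dense_translates_linearIndependent {𝕜 : Type} [RCLike 𝕜] {k r m : ℕ}
    (hk : k + Module.finrank ℝ 𝕜 * m < Module.finrank ℝ 𝕜 * (r + 1))
    (h : EuclideanSpace ℝ (Fin k) → Fin m → Fin r → 𝕜) (hh : ContDiff ℝ 1 h) :
    Dense {A : Fin m → Fin r → 𝕜 | ∀ x, LinearIndependent 𝕜 (h x + A)} := by
  rcases m with _ | n
  · have : {A : Fin 0 → Fin r → 𝕜 | ∀ x, LinearIndependent 𝕜 (h x + A)} = Set.univ :=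
      Set.eq_univ_of_forall fun A x => linearIndependent_empty_type
    rw [this]
    exact dense_univ
  -- `Φ i` parametrizes the pairs (point `x`, dependent tuple whose `i`-th vector is a combination of
  -- the others), the tuple being translated by `-h x`.
  let Φ : Fin (n + 1) → EuclideanSpace ℝ (Fin k) × (Fin n → Fin r → 𝕜) × (Fin n → 𝕜) →
      Fin (n + 1) → Fin r → 𝕜 := fun i p =>
    i.insertNth (∑ j, p.2.2 j • p.2.1 j) p.2.1 - h p.1
  have hΦ : ∀ i, ContDiff ℝ 1 (Φ i) := by
    intro i
    refine ContDiff.sub ?_ (hh.comp contDiff_fst)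
    rw [contDiff_pi]
    intro l
    refine Fin.succAboveCases i ?_ ?_ l
    · simp only [Fin.insertNth_apply_same]
      refine ContDiff.sum fun j _ => ContDiff.fun_smul ?_ ?_
      · exact (contDiff_apply ℝ 𝕜 j).comp (contDiff_snd.comp contDiff_snd)
      · exact (contDiff_apply ℝ (Fin r → 𝕜) j).comp (contDiff_fst.comp contDiff_snd)
    · intro j
      simp only [Fin.insertNth_apply_succAbove]
      exact (contDiff_apply ℝ (Fin r → 𝕜) j).comp (contDiff_fst.comp contDiff_snd)
  have hdim : dimH (⋃ i, Set.range (Φ i)) < Module.finrank ℝ (Fin (n + 1) → Fin r → 𝕜) := by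
    rw [dimH_iUnion]
    refine lt_of_le_of_lt (iSup_le fun i => (hΦ i).dimH_range_le) ?_
    have h1 : Module.finrank ℝ (EuclideanSpace ℝ (Fin k) × (Fin n → Fin r → 𝕜) × (Fin n → 𝕜)) =
        k + (n * (r * Module.finrank ℝ 𝕜) + n * Module.finrank ℝ 𝕜) := by
      simp [Module.finrank_prod, Module.finrank_pi_fintype]
    have h2 : Module.finrank ℝ (Fin (n + 1) → Fin r → 𝕜) =
        (n + 1) * (r * Module.finrank ℝ 𝕜) := by
      simp [Module.finrank_pi_fintype]
    rw [h1, h2]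
    norm_cast
    nlinarith
  refine (dense_compl_of_dimH_lt_finrank hdim).mono ?_
  intro A hA x
  by_contra hli
  apply hA
  obtain ⟨g, hg, i, hi⟩ := Fintype.not_linearIndependent_iff.1 hli
  refine Set.mem_iUnion.2 ⟨i, (x, fun j => (h x + A) (i.succAbove j),
    fun j => -((g i)⁻¹ * g (i.succAbove j))), ?_⟩
  rw [Fin.sum_univ_succAbove _ i] at hg
  have key : ∑ j, (-((g i)⁻¹ * g (i.succAbove j))) • (h x + A) (i.succAbove j) = (h x + A) i := by
    have := congrArg (fun w => (g i)⁻¹ • w) hg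
    simp only [smul_add, smul_zero, smul_smul, inv_mul_cancel₀ hi, one_smul,
      Finset.smul_sum] at this
    simp only [neg_smul, Finset.sum_neg_distrib]
    exact (eq_neg_of_add_eq_zero_left this).symm
  have : (i.insertNth (∑ j, (-((g i)⁻¹ * g (i.succAbove j))) • (h x + A) (i.succAbove j))
      (fun j => (h x + A) (i.succAbove j)) : Fin (n + 1) → Fin r → 𝕜) = h x + A := by
    rw [key]
    exact Fin.insertNth_self_removeNth i (h x + A)
  simp only [Φ]
  rw [this]
  simp

theorem exists_extension_linearIndependent {𝕜 : Type} [RCLike 𝕜] {k r m : ℕ}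
    (hk : k + Module.finrank ℝ 𝕜 * m < Module.finrank ℝ 𝕜 * (r + 1))
    (f : C(sphere (0 : EuclideanSpace ℝ (Fin k)) 1, Fin m → Fin r → 𝕜))
    (hf : ∀ x, LinearIndependent 𝕜 (f x)) :
    ∃ F : EuclideanSpace ℝ (Fin k) → Fin m → Fin r → 𝕜, Continuous F ∧
      (∀ x ∈ closedBall (0 : EuclideanSpace ℝ (Fin k)) 1, LinearIndependent 𝕜 (F x)) ∧
      ∀ x : sphere (0 : EuclideanSpace ℝ (Fin k)) 1, F x = f x := by
  obtain ⟨g, hg⟩ := f.exists_restrict_eq (isClosed_sphere)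
  have hg' : ∀ x : sphere (0 : EuclideanSpace ℝ (Fin k)) 1, g x = f x := fun x =>
    DFunLike.congr_fun hg x
  have hopen : IsOpen {A : Fin m → Fin r → 𝕜 | LinearIndependent 𝕜 A} :=
    isOpen_setOfPred_linearIndependent
  have hU : IsOpen {x | LinearIndependent 𝕜 (g x)} := hopen.preimage g.continuous
  -- A cutoff vanishing on the sphere and equal to `1` where `g` is dependent.
  obtain ⟨ψ, hψ0, hψ1, hψI⟩ := exists_continuous_zero_one_of_isClosed
    (isClosed_sphere (x := (0 : EuclideanSpace ℝ (Fin k))) (ε := 1)) hU.isClosed_compl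
    (by
      rw [Set.disjoint_compl_right_iff_subset]
      intro x hx
      have := hf ⟨x, hx⟩
      rwa [← hg'] at this)
  -- In the ball, `min 1 (2 * ψ)` equals `1` off the compact set `C`, and `g` is independent on `C`.
  let C : Set (EuclideanSpace ℝ (Fin k)) := closedBall 0 1 ∩ {x | ψ x ≤ 1 / 2}
  have hC : IsCompact C := (isCompact_closedBall _ _).inter_right
    (isClosed_le ψ.continuous continuous_const)
  have hCU : g '' C ⊆ {A : Fin m → Fin r → 𝕜 | LinearIndependent 𝕜 A} := by
    rintro _ ⟨x, hx, rfl⟩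
    by_contra hn
    have h1 : ψ x = 1 := hψ1 hn
    have h2 : ψ x ≤ 1 / 2 := hx.2
    linarith
  obtain ⟨ε, hε, hεs⟩ := (hC.image g.continuous).exists_thickening_subset_open hopen hCU
  obtain ⟨h, hh, hhg, -⟩ := g.continuous.exists_contDiff_approx 1
    (ε := fun _ => ε / 2) continuous_const (fun _ => half_pos hε)
  obtain ⟨A, hA, hAε⟩ := (dense_translates_linearIndependent hk h hh).exists_dist_lt 0
    (half_pos hε)
  have hclose : ∀ x, ‖h x + A - g x‖ < ε := by
    intro x
    have h1 := hhg x
    rw [dist_eq_norm] at h1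
    rw [dist_zero_left] at hAε
    calc ‖h x + A - g x‖ = ‖(h x - g x) + A‖ := by congr 1; abel
      _ ≤ ‖h x - g x‖ + ‖A‖ := norm_add_le _ _
      _ < ε := by linarith
  refine ⟨fun x => g x + (min 1 (2 * ψ x)) • (h x + A - g x), ?_, ?_, ?_⟩
  · have := hh.continuous
    have := g.continuous
    have := ψ.continuous
    fun_prop
  · intro x hx
    by_cases hxC : ψ x ≤ 1 / 2
    · apply hεs
      rw [mem_thickening_iff]
      refine ⟨g x, ⟨x, ⟨hx, hxC⟩, rfl⟩, ?_⟩
      rw [dist_eq_norm, add_sub_cancel_left, norm_smul]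
      have h0 : 0 ≤ min 1 (2 * ψ x) := le_min zero_le_one (by linarith [(hψI x).1])
      rw [Real.norm_of_nonneg h0]
      calc _ ≤ 1 * ‖h x + A - g x‖ :=
            mul_le_mul_of_nonneg_right (min_le_left _ _) (norm_nonneg _)
        _ < ε := by rw [one_mul]; exact hclose x
    · have : min 1 (2 * ψ x) = 1 := min_eq_left (by linarith)
      simp only [this, one_smul, add_sub_cancel]
      exact hA x
  · intro x
    have : ψ x = 0 := hψ0 x.2
    simp [this, hg' x]

/-! ### Vector bundles as retracts of trivial bundles -/

section
variable {𝕜 : Type} [RCLike 𝕜] {B : Type} {F : Type} [NormedAddCommGroup F] [NormedSpace 𝕜 F]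
  [TopologicalSpace B] {E : B → Type} [∀ x, AddCommGroup (E x)] [∀ x, Module 𝕜 (E x)]
  [∀ x, TopologicalSpace (E x)] [TopologicalSpace (TotalSpace F E)] [FiberBundle F E]
  [VectorBundle 𝕜 F E]

theorem continuousAt_mk_iff {X : Type} [TopologicalSpace X] {b : X → B} {v : ∀ p, E (b p)}
    {p₀ : X} (hb : ContinuousAt b p₀) (e : Trivialization F (π F E)) [MemTrivializationAtlas e]
    (he : b p₀ ∈ e.baseSet) :
    ContinuousAt (fun p => TotalSpace.mk' F (b p) (v p)) p₀ ↔
      ContinuousAt (fun p => e.linearMapAt 𝕜 (b p) (v p)) p₀ := by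
  have h1 : (fun p => e.linearMapAt 𝕜 (b p) (v p)) =ᶠ[𝓝 p₀]
      fun p => (e (TotalSpace.mk' F (b p) (v p))).2 := by
    filter_upwards [hb.preimage_mem_nhds (e.open_baseSet.mem_nhds he)] with p hp
    rw [e.coe_linearMapAt_of_mem hp]
  rw [continuousAt_congr h1, ContinuousAt, e.tendsto_nhds_iff (e.mem_source.2 he)]
  exact and_iff_right hb

/-- A sum `∑ χ i • v i` of local sections along `b` is continuous as soon as each `v i` is
continuous on the closed support of the scalar function `χ i`. -/
theorem continuousAt_mk_sum_smul {X : Type} [TopologicalSpace X] {b : X → B} {ι : Type}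
    (t : Finset ι) {v : ι → ∀ p, E (b p)} {χ : ι → X → 𝕜} {p₀ : X} (hb : ContinuousAt b p₀)
    (hχ : ∀ i ∈ t, ContinuousAt (χ i) p₀)
    (hv : ∀ i ∈ t, p₀ ∈ tsupport (χ i) →
      ContinuousAt (fun p => TotalSpace.mk' F (b p) (v i p)) p₀) :
    ContinuousAt (fun p => TotalSpace.mk' F (b p) (∑ i ∈ t, χ i p • v i p)) p₀ := by
  have he := mem_baseSet_trivializationAt F E (b p₀)
  rw [continuousAt_mk_iff (𝕜 := 𝕜) hb (trivializationAt F E (b p₀)) he]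
  simp only [map_sum, map_smul]
  refine tendsto_finsetSum _ fun i hi => ?_
  by_cases hp : p₀ ∈ tsupport (χ i)
  · exact (hχ i hi).smul
      ((continuousAt_mk_iff (𝕜 := 𝕜) hb (trivializationAt F E (b p₀)) he).1 (hv i hi hp))
  · have : (fun p => χ i p • (trivializationAt F E (b p₀)).linearMapAt 𝕜 (b p) (v i p))
        =ᶠ[𝓝 p₀] fun _ => 0 := by
      filter_upwards [notMem_tsupport_iff_eventuallyEq.1 hp] with p hp
      simp [hp]
    have h0 : χ i p₀ = 0 := image_eq_zero_of_notMem_tsupport hp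
    rw [h0, zero_smul]
    exact tendsto_const_nhds.congr' this.symm

/-- A vector bundle over a compact Hausdorff space is a retract of a trivial bundle: there are
fiberwise linear maps `J : E → B × F^t` and `P : B × F^t → E` with `P ∘ J = id`, such that `P` and
`J ∘ P` are continuous. -/
theorem exists_retract_of_trivial [CompactSpace B] [T2Space B] :
    ∃ (t : Finset B) (J : ∀ x, E x →ₗ[𝕜] (t → F)) (P : ∀ x, (t → F) →ₗ[𝕜] E x),
      (∀ x v, P x (J x v) = v) ∧
      Continuous (fun p : B × (t → F) => TotalSpace.mk' F p.1 (P p.1 p.2)) ∧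
      Continuous (fun p : B × (t → F) => J p.1 (P p.1 p.2)) := by
  classical
  obtain ⟨t, ht⟩ := isCompact_univ.elim_finite_subcover
    (fun b : B => (trivializationAt F E b).baseSet)
    (fun b => (trivializationAt F E b).open_baseSet)
    (fun x _ => Set.mem_iUnion.2 ⟨x, mem_baseSet_trivializationAt F E x⟩)
  let e : t → Trivialization F (π F E) := fun i => trivializationAt F E i
  obtain ⟨ρ, hρ⟩ := PartitionOfUnity.exists_isSubordinate (isClosed_univ (X := B))
    (fun i : t => (e i).baseSet) (fun i => (e i).open_baseSet) (by
      intro x hx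
      obtain ⟨i, hi, hx⟩ := Set.mem_iUnion₂.1 (ht hx)
      exact Set.mem_iUnion.2 ⟨⟨i, hi⟩, hx⟩)
  let χ : t → B → 𝕜 := fun i x => ((ρ i x : ℝ) : 𝕜)
  have hχc : ∀ i, Continuous (χ i) := fun i => RCLike.continuous_ofReal.comp (ρ i).continuous
  have hχs : ∀ i, tsupport (χ i) ⊆ (e i).baseSet := by
    intro i
    refine (closure_mono ?_).trans (hρ i)
    intro x hx hx'
    exact hx (by simp [χ, hx'])
  let σ : B → 𝕜 := fun x => ∑ i, χ i x * χ i x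
  have hσ : ∀ x, σ x ≠ 0 := by
    intro x hx
    have h1 : (∑ i, ρ i x * ρ i x : ℝ) = 0 := by
      have : ((∑ i, ρ i x * ρ i x : ℝ) : 𝕜) = 0 := by
        rw [← hx]; simp [σ, χ]
      exact_mod_cast this
    have h2 : ∑ i, ρ i x = 1 := by
      rw [← finsum_eq_sum_of_fintype]; exact ρ.sum_eq_one (Set.mem_univ x)
    rw [Finset.sum_eq_zero_iff_of_nonneg (fun i _ => mul_self_nonneg _)] at h1
    have : ∑ i, ρ i x = 0 := Finset.sum_eq_zero fun i hi => mul_self_eq_zero.1 (h1 i hi)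
    linarith
  have hσc : Continuous fun x => (σ x)⁻¹ :=
    (continuous_finsetSum _ fun i _ => (hχc i).mul (hχc i)).inv₀ hσ
  let J : ∀ x, E x →ₗ[𝕜] (t → F) := fun x =>
    LinearMap.pi fun i => χ i x • (e i).linearMapAt 𝕜 x
  let P : ∀ x, (t → F) →ₗ[𝕜] E x := fun x =>
    ∑ i, (χ i x * (σ x)⁻¹) • ((e i).symmₗ 𝕜 x ∘ₗ LinearMap.proj i)
  have hP : Continuous (fun p : B × (t → F) => TotalSpace.mk' F p.1 (P p.1 p.2)) := by
    rw [continuous_iff_continuousAt]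
    rintro ⟨x, w⟩
    simp only [P, LinearMap.smul_apply, LinearMap.sum_apply, LinearMap.comp_apply,
      LinearMap.proj_apply]
    refine continuousAt_mk_sum_smul (b := Prod.fst)
      (χ := fun i (p : B × (t → F)) => χ i p.1 * (σ p.1)⁻¹)
      _ continuousAt_fst (fun i _ => ?_) (fun i _ hx => ?_)
    · exact (((hχc i).mul hσc).comp continuous_fst).continuousAt
    have hx' : x ∈ (e i).baseSet :=
      hχs i (tsupport_mul_subset_left (tsupport_comp_subset_preimage
        (fun x => χ i x * (σ x)⁻¹) (f := (Prod.fst : B × (t → F) → B)) continuous_fst hx))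
    rw [continuousAt_mk_iff (𝕜 := 𝕜) (e := e i) continuousAt_fst hx']
    have : (fun p : B × (t → F) => (e i).linearMapAt 𝕜 p.1 ((e i).symmₗ 𝕜 p.1 (p.2 i)))
        =ᶠ[𝓝 (x, w)] fun p => p.2 i := by
      filter_upwards [continuousAt_fst.preimage_mem_nhds ((e i).open_baseSet.mem_nhds hx')]
        with p hp
      exact (e i).linearMapAt_symmₗ hp _
    refine ContinuousAt.congr ?_ this.symm
    fun_prop
  refine ⟨t, J, P, ?_, hP, ?_⟩
  · intro x v
    have h1 : ∀ i, (χ i x * (σ x)⁻¹) • (e i).symmₗ 𝕜 x (χ i x • (e i).linearMapAt 𝕜 x v)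
        = ((χ i x * χ i x) * (σ x)⁻¹) • v := by
      intro i
      by_cases hx : x ∈ (e i).baseSet
      · rw [map_smul, (e i).symmₗ_linearMapAt hx, smul_smul]
        congr 1
        ring
      · have : χ i x = 0 := image_eq_zero_of_notMem_tsupport fun h => hx (hχs i h)
        simp [this]
    simp only [P, J, LinearMap.smul_apply, LinearMap.sum_apply, LinearMap.comp_apply,
      LinearMap.proj_apply, LinearMap.pi_apply, h1, ← Finset.sum_smul, ← Finset.sum_mul]
    rw [mul_inv_cancel₀ (hσ x), one_smul]
  · rw [continuous_pi_iff]
    intro i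
    rw [continuous_iff_continuousAt]
    rintro ⟨x, w⟩
    simp only [J, LinearMap.pi_apply, LinearMap.smul_apply]
    by_cases hx : x ∈ tsupport (χ i)
    · refine ((hχc i).comp continuous_fst).continuousAt.smul ?_
      exact (continuousAt_mk_iff (𝕜 := 𝕜) (e := e i) continuousAt_fst (hχs i hx)).1
        hP.continuousAt
    · have : (fun p : B × (t → F) => χ i p.1 • (e i).linearMapAt 𝕜 p.1 (P p.1 p.2))
          =ᶠ[𝓝 (x, w)] fun _ => 0 := by
        filter_upwards [continuousAt_fst.eventually (notMem_tsupport_iff_eventuallyEq.1 hx)]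
          with p hp
        simp [hp]
      exact continuousAt_const.congr this.symm

end

/-! ### Triviality over contractible compact spaces -/

section
variable {𝕜 : Type} [RCLike 𝕜] {B : Type} {F : Type} [NormedAddCommGroup F] [NormedSpace 𝕜 F]
  {E : B → Type} [∀ x, AddCommGroup (E x)] [∀ x, Module 𝕜 (E x)]
  [∀ x, TopologicalSpace (E x)] [TopologicalSpace (TotalSpace F E)]

/-- Parallel transport for a continuous family `Q` of idempotents along a contraction `H` of the base
to `x₀`: a continuous family `G` mapping the range of `Q x₀` injectively into the range of `Q x`.
It is the composition of the idempotents at finely spaced points of the path `t ↦ H (t, x)`. -/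
theorem exists_transport {W : Type} [NormedAddCommGroup W] [NormedSpace 𝕜 W]
    [MetricSpace B] [CompactSpace B]
    {H : unitInterval × B → B} (hH : Continuous H) (hH1 : ∀ x, H (1, x) = x)
    {x₀ : B} (hH0 : ∀ x, H (0, x) = x₀) {Q : B → W →L[𝕜] W} (hQ : Continuous Q)
    (hQQ : ∀ x w, Q x (Q x w) = Q x w) :
    ∃ G : B → W →L[𝕜] W, Continuous G ∧ ∀ x w, Q x₀ w = w →
      Q x (G x w) = G x w ∧ (G x w = 0 → w = 0) := by
  have huc : UniformContinuous fun p => Q (H p) :=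
    CompactSpace.uniformContinuous_of_continuous (hQ.comp hH)
  obtain ⟨δ, hδ, hδQ⟩ := Metric.uniformContinuous_iff.1 huc 1 one_pos
  let τ : ℕ → unitInterval := fun j => Set.projIcc 0 1 zero_le_one (j * (δ / 2))
  have hτ : ∀ j, dist (τ (j + 1)) (τ j) < δ := by
    intro j
    refine lt_of_le_of_lt ((LipschitzWith.projIcc zero_le_one).dist_le_mul _ _) ?_
    rw [Real.dist_eq]
    push_cast
    rw [show ((j : ℝ) + 1) * (δ / 2) - j * (δ / 2) = δ / 2 by ring, abs_of_pos (half_pos hδ)]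
    linarith
  have key : ∀ j, ∃ G : B → W →L[𝕜] W, Continuous G ∧ ∀ x w, Q x₀ w = w →
      Q (H (τ j, x)) (G x w) = G x w ∧ (G x w = 0 → w = 0) := by
    intro j
    induction j with
    | zero =>
      refine ⟨fun _ => ContinuousLinearMap.id 𝕜 W, continuous_const, fun x w hw => ?_⟩
      have : τ 0 = 0 := by simp [τ]
      simp [this, hH0, hw]
    | succ j ih =>
      obtain ⟨G, hG, hGw⟩ := ih
      refine ⟨fun x => (Q (H (τ (j + 1), x))).comp (G x), ?_, fun x w hw => ⟨?_, fun h0 => ?_⟩⟩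
      · exact (hQ.comp (hH.comp (by fun_prop))).clm_comp hG
      · exact hQQ _ _
      · obtain ⟨h1, h2⟩ := hGw x w hw
        apply h2
        -- A nonzero vector fixed by one idempotent and killed by the other forces distance `≥ 1`.
        by_contra hne
        have hd : dist (Q (H (τ (j + 1), x))) (Q (H (τ j, x))) < 1 := by
          apply hδQ
          rw [Prod.dist_eq]
          simpa using hτ j
        have h3 : G x w = (Q (H (τ j, x)) - Q (H (τ (j + 1), x))) (G x w) := by
          simp only [ContinuousLinearMap.comp_apply] at h0
          rw [_root_.sub_apply, h0, h1, sub_zero]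
        have h4 := (Q (H (τ j, x)) - Q (H (τ (j + 1), x))).le_opNorm (G x w)
        rw [← h3] at h4
        rw [dist_comm, dist_eq_norm] at hd
        have := norm_pos_iff.2 hne
        nlinarith
  obtain ⟨N, hN⟩ := exists_nat_gt (1 / (δ / 2))
  obtain ⟨G, hG, hGw⟩ := key N
  refine ⟨G, hG, fun x w hw => ?_⟩
  have hτN : τ N = 1 := by
    refine Set.projIcc_of_right_le zero_le_one ?_
    rw [div_lt_iff₀ (half_pos hδ)] at hN
    exact hN.le
  have := hGw x w hw
  rwa [hτN, hH1] at this

/-- A vector bundle over a compact metric space that contracts to a point is trivial. -/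
theorem exists_global_trivialization [MetricSpace B] [CompactSpace B] [FiberBundle F E]
    [VectorBundle 𝕜 F E] [FiniteDimensional 𝕜 F]
    {H : unitInterval × B → B} (hH : Continuous H) (hH1 : ∀ x, H (1, x) = x)
    {x₀ : B} (hH0 : ∀ x, H (0, x) = x₀) :
    ∃ T : ∀ x, F →ₗ[𝕜] E x, (∀ x, Function.Bijective (T x)) ∧
      Continuous (fun p : B × F => TotalSpace.mk' F p.1 (T p.1 p.2)) := by
  obtain ⟨t, J, P, hPJ, hP, hJP⟩ := exists_retract_of_trivial (𝕜 := 𝕜) (F := F) (E := E)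
  let Q : B → (t → F) →L[𝕜] (t → F) := fun x => LinearMap.toContinuousLinearMap (J x ∘ₗ P x)
  have hQ : Continuous Q := by
    rw [continuous_clm_apply]
    intro w
    exact hJP.comp (by fun_prop : Continuous fun x : B => (x, w))
  obtain ⟨G, hG, hGw⟩ := exists_transport hH hH1 hH0 hQ (fun x w => by simp [Q, hPJ])
  let e₀ := (trivializationAt F E x₀).linearEquivAt 𝕜 x₀ (mem_baseSet_trivializationAt F E x₀)
  let A : F →ₗ[𝕜] (t → F) := J x₀ ∘ₗ e₀.symm.toLinearMap
  have hA : ∀ u, Q x₀ (A u) = A u := fun u => by simp [Q, A, hPJ]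
  refine ⟨fun x => P x ∘ₗ (G x).toLinearMap ∘ₗ A, fun x => ?_, ?_⟩
  · let e := (trivializationAt F E x).linearEquivAt 𝕜 x (mem_baseSet_trivializationAt F E x)
    have : FiniteDimensional 𝕜 (E x) := e.symm.finiteDimensional
    have hinj : Function.Injective (P x ∘ₗ (G x).toLinearMap ∘ₗ A) := by
      rw [← LinearMap.ker_eq_bot, LinearMap.ker_eq_bot']
      intro u hu
      obtain ⟨h1, h2⟩ := hGw x (A u) (hA u)
      have h3 : A u = 0 := by
        apply h2
        rw [← h1]
        change J x (P x (G x (A u))) = 0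
        have hu' : P x (G x (A u)) = 0 := hu
        rw [hu', map_zero]
      have h4 : P x₀ (J x₀ (e₀.symm u)) = 0 := by
        change P x₀ (A u) = 0
        rw [h3, map_zero]
      rw [hPJ] at h4
      simpa using h4
    exact ⟨hinj, (LinearMap.injective_iff_surjective_of_finrank_eq_finrank
      e.symm.finrank_eq).1 hinj⟩
  · have hAc : Continuous A := A.continuous_of_finiteDimensional
    have : Continuous fun p : B × F => (p.1, G p.1 (A p.2)) := by fun_prop
    exact hP.comp this

/-- Coordinates with respect to a global trivialization `T` are continuous: if `T (u p)` is a
continuous section along `b`, then `u` is continuous. -/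
theorem continuous_of_continuous_frame_apply {X : Type} [TopologicalSpace X] [TopologicalSpace B]
    [FiberBundle F E]
    [VectorBundle 𝕜 F E] [FiniteDimensional 𝕜 F] {T : ∀ x, F →ₗ[𝕜] E x}
    (hTb : ∀ x, Function.Bijective (T x))
    (hT : Continuous (fun p : B × F => TotalSpace.mk' F p.1 (T p.1 p.2)))
    {b : X → B} (hb : Continuous b) {u : X → F}
    (hu : Continuous fun p => TotalSpace.mk' F (b p) (T (b p) (u p))) : Continuous u := by
  have : CompleteSpace F := FiniteDimensional.complete 𝕜 F
  rw [continuous_iff_continuousAt]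
  intro p₀
  let e := trivializationAt F E (b p₀)
  have he : b p₀ ∈ e.baseSet := mem_baseSet_trivializationAt F E (b p₀)
  let M : X → F →L[𝕜] F := fun p =>
    LinearMap.toContinuousLinearMap (e.linearMapAt 𝕜 (b p) ∘ₗ T (b p))
  have hnhds : {p | b p ∈ e.baseSet} ∈ 𝓝 p₀ :=
    hb.continuousAt.preimage_mem_nhds (e.open_baseSet.mem_nhds he)
  have hMunit : ∀ p, b p ∈ e.baseSet → IsUnit (M p) := by
    intro p hp
    have : Function.Bijective (e.linearEquivAt 𝕜 (b p) hp ∘ T (b p)) :=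
      (e.linearEquivAt 𝕜 (b p) hp).bijective.comp (hTb _)
    exact ContinuousLinearMap.isUnit_iff_bijective.2 (by
      have hM' : ⇑(M p) = e.linearEquivAt 𝕜 (b p) hp ∘ T (b p) := by
        funext v
        simp [M, e.linearMapAt_def_of_mem hp]
      rwa [hM'])
  have hM : ContinuousAt M p₀ := by
    have : ContinuousOn M {p | b p ∈ e.baseSet} := by
      rw [continuousOn_clm_apply]
      intro v p hp
      refine ContinuousAt.continuousWithinAt ?_
      exact (continuousAt_mk_iff (𝕜 := 𝕜) hb.continuousAt e hp).1
        (hT.comp (hb.prodMk continuous_const)).continuousAt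
    exact this.continuousAt hnhds
  have hy : ContinuousAt (fun p => e.linearMapAt 𝕜 (b p) (T (b p) (u p))) p₀ :=
    (continuousAt_mk_iff (𝕜 := 𝕜) hb.continuousAt e he).1 hu.continuousAt
  have hinv : ContinuousAt (fun p => Ring.inverse (M p)) p₀ := by
    obtain ⟨m, hm⟩ := hMunit p₀ he
    refine ContinuousAt.comp (g := Ring.inverse) ?_ hM
    rw [← hm]
    exact NormedRing.inverse_continuousAt m
  refine (hinv.clm_apply hy).congr ?_
  filter_upwards [hnhds] with p hp
  change (Ring.inverse (M p)) (M p (u p)) = u p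
  rw [← mul_apply_eq_comp, Ring.inverse_mul_cancel _ (hMunit p hp)]
  rfl
end

/-! ### The extension theorem -/

/-- Let `𝕜` be `ℝ` or `ℂ` and let `c = dim_ℝ 𝕜`.  Let `D^k` be the closed unit ball in
`ℝ^k` and `∂D^k` its boundary sphere.  Let `E` be a `𝕜`-vector bundle of rank `r` over
`D^k` and let `ι` be an injective vector bundle map from the trivial bundle
`∂D^k × 𝕜^m` into `E|_{∂D^k}`.  If `r - m ≥ ⌈(k+1)/c⌉ - 1`, then `ι` extends to an
injective vector bundle map `ι' : D^k × 𝕜^m → E`. -/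
theorem stmt12 (𝕜 : Type) [RCLike 𝕜] (k r m : ℕ)
    (E : (closedBall (0 : EuclideanSpace ℝ (Fin k)) 1) → Type)
    [∀ x, AddCommGroup (E x)] [∀ x, Module 𝕜 (E x)] [∀ x, TopologicalSpace (E x)]
    [TopologicalSpace (TotalSpace (Fin r → 𝕜) E)]
    [FiberBundle (Fin r → 𝕜) E] [VectorBundle 𝕜 (Fin r → 𝕜) E]
    (ι : ∀ x : closedBall (0 : EuclideanSpace ℝ (Fin k)) 1, (Fin m → 𝕜) →ₗ[𝕜] E x)
    (hι_cont : ContinuousOn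
      (fun p : (closedBall (0 : EuclideanSpace ℝ (Fin k)) 1) × (Fin m → 𝕜) =>
        TotalSpace.mk' (Fin r → 𝕜) p.1 (ι p.1 p.2))
      {p | (p.1 : EuclideanSpace ℝ (Fin k)) ∈ sphere 0 1})
    (hι_inj : ∀ x : closedBall (0 : EuclideanSpace ℝ (Fin k)) 1,
      (x : EuclideanSpace ℝ (Fin k)) ∈ sphere 0 1 → Function.Injective (ι x))
    (h : (⌈((k : ℚ) + 1) / (Module.finrank ℝ 𝕜 : ℚ)⌉ - 1 : ℤ) ≤ (r : ℤ) - (m : ℤ)) :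
    ∃ ι' : ∀ x : closedBall (0 : EuclideanSpace ℝ (Fin k)) 1, (Fin m → 𝕜) →ₗ[𝕜] E x,
      Continuous (fun p : (closedBall (0 : EuclideanSpace ℝ (Fin k)) 1) × (Fin m → 𝕜) =>
        TotalSpace.mk' (Fin r → 𝕜) p.1 (ι' p.1 p.2)) ∧
      (∀ x, Function.Injective (ι' x)) ∧
      (∀ x : closedBall (0 : EuclideanSpace ℝ (Fin k)) 1,
        (x : EuclideanSpace ℝ (Fin k)) ∈ sphere 0 1 → ι' x = ι x) := by
  have hk : k + Module.finrank ℝ 𝕜 * m < Module.finrank ℝ 𝕜 * (r + 1) := by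
    have hc : (0 : ℚ) < (Module.finrank ℝ 𝕜 : ℚ) := by exact_mod_cast Module.finrank_pos
    have h1 : ⌈((k : ℚ) + 1) / (Module.finrank ℝ 𝕜 : ℚ)⌉ ≤ (r : ℤ) - m + 1 := by linarith
    rw [Int.ceil_le, div_le_iff₀ hc] at h1
    push_cast at h1
    have h2 : (k : ℚ) + Module.finrank ℝ 𝕜 * m < Module.finrank ℝ 𝕜 * (r + 1) := by linarith
    exact_mod_cast h2
  have : CompactSpace (closedBall (0 : EuclideanSpace ℝ (Fin k)) 1) :=
    isCompact_iff_compactSpace.1 (isCompact_closedBall _ _)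
  let H : unitInterval × closedBall (0 : EuclideanSpace ℝ (Fin k)) 1 →
      closedBall (0 : EuclideanSpace ℝ (Fin k)) 1 := fun p =>
    ⟨(p.1 : ℝ) • (p.2 : EuclideanSpace ℝ (Fin k)), by
      have h2 := mem_closedBall_zero_iff.1 p.2.2
      rw [mem_closedBall_zero_iff, norm_smul, Real.norm_of_nonneg p.1.2.1]
      exact mul_le_one₀ p.1.2.2 (norm_nonneg _) h2⟩
  have hH : Continuous H := by
    refine Continuous.subtype_mk ?_ _
    fun_prop
  obtain ⟨T, hTb, hT⟩ := exists_global_trivialization (𝕜 := 𝕜) (F := Fin r → 𝕜) (E := E) hH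
    (fun x => by simp [H]) (x₀ := ⟨0, mem_closedBall_self zero_le_one⟩) (fun x => by simp [H])
  let inc : sphere (0 : EuclideanSpace ℝ (Fin k)) 1 →
      closedBall (0 : EuclideanSpace ℝ (Fin k)) 1 := Set.inclusion sphere_subset_closedBall
  have hinc : Continuous inc := continuous_inclusion sphere_subset_closedBall
  let Te := fun x => LinearEquiv.ofBijective (T x) (hTb x)
  let f : sphere (0 : EuclideanSpace ℝ (Fin k)) 1 → Fin m → Fin r → 𝕜 := fun s j =>
    (Te (inc s)).symm (ι (inc s) (Pi.basisFun 𝕜 (Fin m) j))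
  have hTf : ∀ s j, T (inc s) (f s j) = ι (inc s) (Pi.basisFun 𝕜 (Fin m) j) := fun s j =>
    (Te (inc s)).apply_symm_apply _
  have hf : Continuous f := by
    refine continuous_pi fun j => continuous_of_continuous_frame_apply hTb hT hinc ?_
    simp only [hTf]
    exact hι_cont.comp_continuous (f := fun s => (inc s, Pi.basisFun 𝕜 (Fin m) j))
      (hinc.prodMk continuous_const) fun s => s.2
  have hfli : ∀ s, LinearIndependent 𝕜 (f s) := fun s =>
    (Pi.basisFun 𝕜 (Fin m)).linearIndependent.map'
      ((Te (inc s)).symm.toLinearMap ∘ₗ ι (inc s))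
      (LinearMap.ker_eq_bot.2 ((Te (inc s)).symm.injective.comp (hι_inj (inc s) s.2)))
  obtain ⟨G, hG, hGli, hGf⟩ := exists_extension_linearIndependent hk ⟨f, hf⟩ hfli
  refine ⟨fun x => T x ∘ₗ Fintype.linearCombination 𝕜 (G x), ?_, fun x => ?_, fun x hx => ?_⟩
  · have : Continuous fun p : (closedBall (0 : EuclideanSpace ℝ (Fin k)) 1) × (Fin m → 𝕜) =>
        (p.1, Fintype.linearCombination 𝕜 (G p.1) p.2) := by
      simp only [Fintype.linearCombination_apply]
      fun_prop
    exact hT.comp this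
  · exact (hTb x).1.comp (linearIndependent_iff_injective_fintypeLinearCombination.1 (hGli x x.2))
  · refine (Pi.basisFun 𝕜 (Fin m)).ext fun j => ?_
    have hx' : x = inc ⟨x, hx⟩ := rfl
    have h1 : G x = f ⟨x, hx⟩ := hGf ⟨x, hx⟩
    rw [LinearMap.comp_apply, h1, Pi.basisFun_apply, Fintype.linearCombination_apply_single,
      one_smul, ← Pi.basisFun_apply]
    exact hTf ⟨x, hx⟩ j
end

section
/- Let 𝕜 be ℝ or ℂ and let X be a topological space. Let L and L' be 𝕜-vector bundles of rank 1 over X, and let V be a 𝕜-vector bundle of rank n over X. If there is a vector bundle isomorphism L ⊕ V ≅ L' ⊕ V, then there is a vector bundle isomorphism L ≅ L'. (This is the case of trivial symmetry group of the statement that stably isomorphic equivariant real or complex line bundles are isomorphic.) -/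
/-!
The isomorphism `L ⊕ V ≅ L' ⊕ V` induces one on top exterior powers, that is
`L ⊗ det V ≅ L' ⊗ det V`, and the line bundle `det V` can be cancelled. The resulting isomorphism
`L ≅ L'` is written down without exterior powers: on a fiber, choose any linear isomorphism
`s : L'ₓ ≃ Lₓ` and take `det ((s ⊕ id) ∘ φₓ) • s⁻¹`. Replacing `s` by `c s` multiplies the
determinant by `c` and `s⁻¹` by `c⁻¹`, so the result does not depend on `s`
(`detIso_eq`). Continuity is local; near a point one computes with the `s` coming from local
trivializations, and then the map is multiplication by the determinant of the matrix of `φ` in these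
trivializations (`detIso_apply_of_coords`), which varies continuously (`continuousOn_localDet`).
-/

open Bundle

section Fiber

variable {K L L' V : Type*} [Field K] [AddCommGroup L] [Module K L] [AddCommGroup L'] [Module K L']
  [AddCommGroup V] [Module K V]

/-- The isomorphism `det ((s ⊕ id) ∘ φ) • s⁻¹ : L ≃ L'` obtained from `φ : L ⊕ V ≃ L' ⊕ V` and an
auxiliary isomorphism `s : L' ≃ L`. -/
noncomputable def detIso (φ : (L × V) ≃ₗ[K] (L' × V)) (s : L' ≃ₗ[K] L) : L ≃ₗ[K] L' :=
  s.symm.trans (LinearEquiv.smulOfNeZero K L'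
    (LinearMap.det (φ.trans (s.prodCongr (LinearEquiv.refl K V)) : L × V →ₗ[K] L × V))
    (LinearEquiv.isUnit_det' _).ne_zero)

theorem detIso_apply (φ : (L × V) ≃ₗ[K] (L' × V)) (s : L' ≃ₗ[K] L) (l : L) :
    detIso φ s l =
      LinearMap.det (φ.trans (s.prodCongr (LinearEquiv.refl K V)) : L × V →ₗ[K] L × V) • s.symm l :=
  rfl

/-- For lines, `detIso φ s` does not depend on `s`: two choices of `s` differ by a scalar, which
cancels. -/
theorem detIso_eq [FiniteDimensional K V] (hL : Module.finrank K L = 1)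
    (φ : (L × V) ≃ₗ[K] (L' × V)) (s t : L' ≃ₗ[K] L) : detIso φ s = detIso φ t := by
  have : FiniteDimensional K L := Module.finite_of_finrank_eq_succ hL
  obtain ⟨v, hv, hspan⟩ := finrank_eq_one_iff'.1 hL
  obtain ⟨c, hc⟩ := hspan (t (s.symm v))
  have hts : ∀ y, t y = c • s y := by
    intro y
    obtain ⟨a, ha⟩ := hspan (s y)
    have : y = a • s.symm v := by rw [← map_smul, ha, s.symm_apply_apply]
    rw [this, map_smul, map_smul, s.apply_symm_apply, ← hc, smul_comm]
  have hdet : LinearMap.det (φ.trans (t.prodCongr (LinearEquiv.refl K V)) : L × V →ₗ[K] L × V) =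
      c * LinearMap.det (φ.trans (s.prodCongr (LinearEquiv.refl K V)) : L × V →ₗ[K] L × V) := by
    have h : (φ.trans (t.prodCongr (LinearEquiv.refl K V)) : L × V →ₗ[K] L × V) =
        ((c • LinearMap.id : L →ₗ[K] L).prodMap (LinearMap.id : V →ₗ[K] V)) ∘ₗ
          (φ.trans (s.prodCongr (LinearEquiv.refl K V)) : L × V →ₗ[K] L × V) := by
      refine LinearMap.ext fun p => ?_
      simp [hts]
    rw [h, LinearMap.det_comp, LinearMap.det_prodMap, LinearMap.det_smul, hL]
    simp
  refine LinearEquiv.ext fun l => ?_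
  have hl : s.symm l = c • t.symm l := by
    rw [s.symm_apply_eq, map_smul, ← hts, t.apply_symm_apply]
  rw [detIso_apply, detIso_apply, hdet, hl, smul_smul, mul_comm]

/-- In coordinates `e`, `e'`, `f` on `L`, `L'`, `V`, the map `detIso φ s` is multiplication by the
determinant of the coordinate expression of `φ`. -/
theorem detIso_apply_of_coords {F : Type*} [AddCommGroup F] [Module K F] [FiniteDimensional K F]
    (φ : (L × V) ≃ₗ[K] (L' × V)) (s : L' ≃ₗ[K] L)
    (e : L ≃ₗ[K] K) (e' : L' ≃ₗ[K] K) (f : V ≃ₗ[K] F) (l : L) :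
    e' (detIso φ s l) =
      LinearMap.det (((e.prodCongr f).symm.trans φ).trans (e'.prodCongr f) :
        K × F →ₗ[K] K × F) * e l := by
  have : FiniteDimensional K V := Module.Finite.equiv f.symm
  have hL : Module.finrank K L = 1 := by rw [e.finrank_eq, Module.finrank_self]
  rw [detIso_eq hL φ s (e'.trans e.symm), detIso_apply, map_smul,
    ← LinearMap.det_conj _ (e.prodCongr f)]
  simp only [LinearEquiv.trans_symm, LinearEquiv.symm_symm, LinearEquiv.trans_apply,
    LinearEquiv.apply_symm_apply, smul_eq_mul]
  congr 2
  refine LinearMap.ext fun p => ?_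
  simp

end Fiber

section Bundle

variable {𝕜 : Type*} [RCLike 𝕜] {X : Type*} [TopologicalSpace X]

/-- A fiberwise map of line bundles is continuous at the points over `U` if in trivializations over
`U` it is multiplication by a continuous function `d`. -/
theorem continuousAt_of_local_mul
    {L L' : X → Type*} [∀ x, AddCommGroup (L x)] [∀ x, Module 𝕜 (L x)]
    [TopologicalSpace (TotalSpace 𝕜 L)]
    [∀ x, AddCommGroup (L' x)] [∀ x, Module 𝕜 (L' x)]
    [TopologicalSpace (TotalSpace 𝕜 L')]
    (e : Trivialization 𝕜 (π 𝕜 L)) (e' : Trivialization 𝕜 (π 𝕜 L'))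
    (ψ : ∀ x, L x → L' x) (d : X → 𝕜) {U : Set X} (hU : IsOpen U) (hUe : U ⊆ e.baseSet)
    (hUe' : U ⊆ e'.baseSet) (hd : ContinuousOn d U)
    (h : ∀ x ∈ U, ∀ l : L x, (e' ⟨x, ψ x l⟩).2 = d x * (e ⟨x, l⟩).2)
    (p : TotalSpace 𝕜 L) (hp : p.1 ∈ U) :
    ContinuousAt (fun p : TotalSpace 𝕜 L => TotalSpace.mk' 𝕜 p.1 (ψ p.1 p.2)) p := by
  have he : ContinuousOn e (π 𝕜 L ⁻¹' U) :=
    e.continuousOn.mono fun q hq => e.mem_source.2 (hUe hq)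
  have hproj : ContinuousOn (π 𝕜 L) (π 𝕜 L ⁻¹' U) :=
    e.continuousOn_proj.mono fun q hq => e.mem_source.2 (hUe hq)
  have hopen : π 𝕜 L ⁻¹' U ∈ nhds p :=
    (e.continuousAt_proj (e.mem_source.2 (hUe hp))).preimage_mem_nhds (hU.mem_nhds hp)
  refine ContinuousOn.continuousAt ?_ hopen
  have hpair : ContinuousOn (fun q : TotalSpace 𝕜 L => (q.1, d q.1 * (e q).2)) (π 𝕜 L ⁻¹' U) :=
    hproj.prodMk ((hd.comp hproj fun q hq => hq).mul he.snd)
  refine (e'.continuousOn_symm.comp hpair fun q hq => ⟨hUe' hq, Set.mem_univ _⟩).congr ?_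
  rintro ⟨x, l⟩ hx
  have := h x hx l
  simp only [Function.comp_apply]
  rw [← this, e'.symm_apply_apply_mk (hUe' hx)]

/-- The determinant of a continuous bundle map in trivializations varies continuously. The
coordinate expression of `φ` is supplied as a family `D` of endomorphisms of the model fiber, so
its values outside `U` are irrelevant. -/
theorem continuousOn_localDet {F : Type*} [NormedAddCommGroup F] [NormedSpace 𝕜 F]
    [FiniteDimensional 𝕜 F]
    {E E' : X → Type*} [∀ x, AddCommGroup (E x)] [TopologicalSpace (TotalSpace F E)]
    [TopologicalSpace (TotalSpace F E')]
    (e : Trivialization F (π F E)) (e' : Trivialization F (π F E'))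
    (φ : ∀ x, E x → E' x)
    (hφ : Continuous (fun p : TotalSpace F E => TotalSpace.mk' F p.1 (φ p.1 p.2)))
    {U : Set X} (hUe : U ⊆ e.baseSet) (hUe' : U ⊆ e'.baseSet)
    (D : X → F →ₗ[𝕜] F) (hD : ∀ x ∈ U, ∀ v, D x v = (e' ⟨x, φ x (e.symm x v)⟩).2) :
    ContinuousOn (fun x => LinearMap.det (D x)) U := by
  have hv : ∀ v, ContinuousOn (fun x => D x v) U := by
    intro v
    have h1 : ContinuousOn (fun x => TotalSpace.mk' F x (e.symm x v)) U :=
      e.continuousOn_symm.comp (f := fun x => (x, v)) (by fun_prop)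
        fun x hx => ⟨hUe hx, Set.mem_univ _⟩
    have h2 : ContinuousOn (fun x => e' ⟨x, φ x (e.symm x v)⟩) U :=
      e'.continuousOn.comp (hφ.comp_continuousOn h1) fun x hx => e'.mem_source.2 (hUe' hx)
    exact h2.snd.congr fun x hx => hD x hx v
  let b := Module.finBasis 𝕜 F
  have hdet : ∀ x, LinearMap.det (D x) = (LinearMap.toMatrix b b (D x)).det :=
    fun x => (LinearMap.det_toMatrix b (D x)).symm
  simp only [hdet]
  refine Continuous.comp_continuousOn (g := Matrix.det) continuous_id.matrix_det ?_
  refine continuousOn_pi.2 fun i => continuousOn_pi.2 fun j => ?_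
  simp only [LinearMap.toMatrix_apply]
  exact (b.coord i).continuous_of_finiteDimensional.comp_continuousOn (hv (b j))

end Bundle


/-- Let `𝕜` be `ℝ` or `ℂ` and let `X` be a topological space.  Let `L` and `L'` be
`𝕜`-vector bundles of rank 1 over `X` and let `V` be a `𝕜`-vector bundle of rank `n`
over `X`.  If there is a vector bundle isomorphism `L ⊕ V ≅ L' ⊕ V`, then there is a
vector bundle isomorphism `L ≅ L'`. -/
theorem stmt17 (𝕜 : Type) [RCLike 𝕜] {X : Type} [TopologicalSpace X] (n : ℕ)
    (L : X → Type) [∀ x, AddCommGroup (L x)] [∀ x, Module 𝕜 (L x)]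
    [∀ x, TopologicalSpace (L x)] [TopologicalSpace (TotalSpace 𝕜 L)]
    [FiberBundle 𝕜 L] [VectorBundle 𝕜 𝕜 L]
    (L' : X → Type) [∀ x, AddCommGroup (L' x)] [∀ x, Module 𝕜 (L' x)]
    [∀ x, TopologicalSpace (L' x)] [TopologicalSpace (TotalSpace 𝕜 L')]
    [FiberBundle 𝕜 L'] [VectorBundle 𝕜 𝕜 L']
    (V : X → Type) [∀ x, AddCommGroup (V x)] [∀ x, Module 𝕜 (V x)]
    [∀ x, TopologicalSpace (V x)] [TopologicalSpace (TotalSpace (Fin n → 𝕜) V)]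
    [FiberBundle (Fin n → 𝕜) V] [VectorBundle 𝕜 (Fin n → 𝕜) V]
    (φ : ∀ x, (L x × V x) ≃ₗ[𝕜] (L' x × V x))
    (hφ_cont : Continuous
      (fun p : TotalSpace (𝕜 × (Fin n → 𝕜)) (L ×ᵇ V) =>
        TotalSpace.mk' (𝕜 × (Fin n → 𝕜)) (E := L' ×ᵇ V) p.1 (φ p.1 p.2)))
    (hφ_cont_symm : Continuous
      (fun p : TotalSpace (𝕜 × (Fin n → 𝕜)) (L' ×ᵇ V) =>
        TotalSpace.mk' (𝕜 × (Fin n → 𝕜)) (E := L ×ᵇ V) p.1 ((φ p.1).symm p.2))) :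
    ∃ ψ : ∀ x, L x ≃ₗ[𝕜] L' x,
      Continuous (fun p : TotalSpace 𝕜 L => TotalSpace.mk' 𝕜 p.1 (ψ p.1 p.2)) ∧
      Continuous (fun p : TotalSpace 𝕜 L' => TotalSpace.mk' 𝕜 p.1 ((ψ p.1).symm p.2)) := by
  -- An arbitrary, possibly discontinuous, choice of fiberwise isomorphisms.
  have s : ∀ x, L' x ≃ₗ[𝕜] L x := fun x =>
    ((trivializationAt 𝕜 L' x).linearEquivAt 𝕜 x (mem_baseSet_trivializationAt 𝕜 L' x)).trans
      ((trivializationAt 𝕜 L x).linearEquivAt 𝕜 x (mem_baseSet_trivializationAt 𝕜 L x)).symm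
  -- Around every point, `detIso` is multiplication by a continuous nowhere zero function.
  have key : ∀ x₀ : X, ∃ (U : Set X) (d : X → 𝕜), IsOpen U ∧ x₀ ∈ U ∧
      U ⊆ (trivializationAt 𝕜 L x₀).baseSet ∧ U ⊆ (trivializationAt 𝕜 L' x₀).baseSet ∧
      ContinuousOn d U ∧ (∀ x ∈ U, d x ≠ 0) ∧
      ∀ x ∈ U, ∀ l : L x, (trivializationAt 𝕜 L' x₀ ⟨x, detIso (φ x) (s x) l⟩).2 =
        d x * (trivializationAt 𝕜 L x₀ ⟨x, l⟩).2 := by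
    classical
    intro x₀
    set e := trivializationAt 𝕜 L x₀ with he
    set e' := trivializationAt 𝕜 L' x₀ with he'
    set f := trivializationAt (Fin n → 𝕜) V x₀ with hf
    let U := e.baseSet ∩ e'.baseSet ∩ f.baseSet
    let A : ∀ x ∈ U, (𝕜 × (Fin n → 𝕜)) ≃ₗ[𝕜] (𝕜 × (Fin n → 𝕜)) := fun x hx =>
      ((((e.linearEquivAt 𝕜 x hx.1.1).prodCongr (f.linearEquivAt 𝕜 x hx.2)).symm.trans
        (φ x)).trans ((e'.linearEquivAt 𝕜 x hx.1.2).prodCongr (f.linearEquivAt 𝕜 x hx.2)))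
    let D : X → (𝕜 × (Fin n → 𝕜)) →ₗ[𝕜] (𝕜 × (Fin n → 𝕜)) := fun x =>
      if hx : x ∈ U then (A x hx : _ →ₗ[𝕜] _) else 0
    have hDU : ∀ x (hx : x ∈ U), D x = (A x hx : _ →ₗ[𝕜] _) := fun x hx => dif_pos hx
    refine ⟨U, fun x => LinearMap.det (D x),
      (e.open_baseSet.inter e'.open_baseSet).inter f.open_baseSet,
      ⟨⟨mem_baseSet_trivializationAt 𝕜 L x₀, mem_baseSet_trivializationAt 𝕜 L' x₀⟩,
        mem_baseSet_trivializationAt _ V x₀⟩, fun x hx => hx.1.1, fun x hx => hx.1.2, ?_, ?_, ?_⟩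
    · refine continuousOn_localDet (e.prod f) (e'.prod f) (fun x => φ x) hφ_cont
        (fun x hx => ⟨hx.1.1, hx.2⟩) (fun x hx => ⟨hx.1.2, hx.2⟩) D fun x hx v => ?_
      have hsymm : (e.prod f).symm x v = (e.symm x v.1, f.symm x v.2) := by
        have h : TotalSpace.mk' (𝕜 × (Fin n → 𝕜)) (E := L ×ᵇ V) x ((e.prod f).symm x v) =
            TotalSpace.mk' (𝕜 × (Fin n → 𝕜)) (E := L ×ᵇ V) x (e.symm x v.1, f.symm x v.2) :=
          (e.prod f).mk_symm (b := x) ⟨hx.1.1, hx.2⟩ v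
        simpa using h
      rw [hDU x hx, hsymm]
      change A x hx v = _
      simp only [A, LinearEquiv.trans_apply]
      have h1 : ((e.linearEquivAt 𝕜 x hx.1.1).prodCongr (f.linearEquivAt 𝕜 x hx.2)).symm v =
          (e.symm x v.1, f.symm x v.2) := rfl
      rw [h1]
      rfl
    · intro x hx
      simp only [hDU x hx]
      exact (LinearEquiv.isUnit_det' _).ne_zero
    · intro x hx l
      simp only [hDU x hx]
      exact detIso_apply_of_coords (φ x) (s x) (e.linearEquivAt 𝕜 x hx.1.1)
        (e'.linearEquivAt 𝕜 x hx.1.2) (f.linearEquivAt 𝕜 x hx.2) l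
  refine ⟨fun x => detIso (φ x) (s x), ?_, ?_⟩
  · refine continuous_iff_continuousAt.2 fun p => ?_
    obtain ⟨U, d, hU, hpU, hUe, hUe', hd, -, h⟩ := key p.1
    exact continuousAt_of_local_mul _ _ (fun x => detIso (φ x) (s x)) d hU hUe hUe' hd h p hpU
  · refine continuous_iff_continuousAt.2 fun p => ?_
    obtain ⟨U, d, hU, hpU, hUe, hUe', hd, hd0, h⟩ := key p.1
    refine continuousAt_of_local_mul _ _ (fun x => (detIso (φ x) (s x)).symm) (fun x => (d x)⁻¹)
      hU hUe' hUe (hd.inv₀ hd0) (fun x hx l => ?_) p hpU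
    have := h x hx ((detIso (φ x) (s x)).symm l)
    rw [LinearEquiv.apply_symm_apply] at this
    rw [this, inv_mul_cancel_left₀ (hd0 x hx)]
end
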